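/- arXiv:math/9907154 — 8 statements merged into one kernel-verified Lean document; each statement's English description precedes it below -/
import Mathlib

section
/- Let d, n, m be positive integers and V = ℂ^d. Two pairs (F, F′) and (G, G′), each consisting of an n-step flag and an m-step flag in V, lie in the same orbit of the diagonal GL(V)-action if and only if their invariant matrices coincide, i.e. a_{ij}(F, F′) = a_{ij}(G, G′) for all 1 ≤ i ≤ n, 1 ≤ j ≤ m. -/
open Module Submodule

/-- An `n`-step flag in `V = ℂ^d`: a chain of subspaces
`0 = F_0 ⊆ F_1 ⊆ ⋯ ⊆ F_n = V`. -/
def IsFlag {d n : ℕ} (F : Fin (n + 1) → Submodule ℂ (Fin d → ℂ)) : Prop :=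
  Monotone F ∧ F 0 = ⊥ ∧ F (Fin.last n) = ⊤

/-- The invariant matrix of a pair of flags: its `(i,j)`-entry is
`dim_ℂ (F_i ∩ F'_j) / ((F_{i−1} ∩ F'_j) + (F_i ∩ F'_{j−1}))`. -/
noncomputable def invMatrix {d n m : ℕ} (F : Fin (n + 1) → Submodule ℂ (Fin d → ℂ))
    (F' : Fin (m + 1) → Submodule ℂ (Fin d → ℂ)) (i : Fin n) (j : Fin m) : ℕ :=
  Module.finrank ℂ
    (↥(F i.succ ⊓ F' j.succ) ⧸
      Submodule.comap (F i.succ ⊓ F' j.succ).subtype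
        ((F i.castSucc ⊓ F' j.succ) ⊔ (F i.succ ⊓ F' j.castSucc)))

/-- Two pairs of flags lie in the same orbit of the diagonal `GL(V)`-action. -/
def SameOrbit {d n m : ℕ}
    (p q : (Fin (n + 1) → Submodule ℂ (Fin d → ℂ)) × (Fin (m + 1) → Submodule ℂ (Fin d → ℂ))) :
    Prop :=
  ∃ g : (Fin d → ℂ) ≃ₗ[ℂ] (Fin d → ℂ),
    (∀ i, (p.1 i).map (g : (Fin d → ℂ) →ₗ[ℂ] (Fin d → ℂ)) = q.1 i) ∧
    (∀ j, (p.2 j).map (g : (Fin d → ℂ) →ₗ[ℂ] (Fin d → ℂ)) = q.2 j)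

/-!
Choose a complement `W i j` of the denominator of the `(i, j)` graded piece inside `F_i ∩ F'_j`.
Induction on the indices gives `F_i ∩ F'_j = ∑ W k l` over `k ≤ i`, `l ≤ j`. This sum is direct:
in lexicographic order, the summands before `W i j` lie in `F_{i-1} + (F_i ∩ F'_{j-1})`, which by
modularity meets `F'_j` exactly in the denominator that `W i j` avoids. Hence `⨁ W i j = V` and both
flags are sums of summands, so isomorphisms between the graded pieces of two pairs of flags glue to
an automorphism of `V` carrying one pair to the other. The same works in any semisimple module,
with linear equivalence of the graded pieces in place of equality of dimensions.
-/

section Lattice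

variable {α : Type*}

/-- A finite filtration in a bounded order: a chain `⊥ = F 0 ≤ F 1 ≤ ⋯ ≤ F n = ⊤`. It extends
`IsFlag` from the subspaces of `ℂ^d` to an arbitrary bounded order. -/
structure IsFiniteFiltration [PartialOrder α] [BoundedOrder α] {n : ℕ} (F : Fin (n + 1) → α) :
    Prop where
  monotone : Monotone F
  zero_eq_bot : F 0 = ⊥
  last_eq_top : F (Fin.last n) = ⊤

theorem iSupIndep_of_disjoint_iSup_lt [CompleteLattice α] [IsModularLattice α]
    {ι : Type*} [LinearOrder ι] [Finite ι] {f : ι → α}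
    (h : ∀ i, Disjoint (f i) (⨆ j < i, f j)) : iSupIndep f := by
  have := Fintype.ofFinite ι
  rw [iSupIndep_iff_supIndep_univ]
  induction (Finset.univ : Finset ι) using Finset.induction_on_max with
  | empty => exact Finset.supIndep_empty f
  | insert i s hlt hs =>
    have hle : s.sup f ≤ ⨆ j < i, f j :=
      Finset.sup_le fun j hj => le_iSup₂_of_le j (hlt j hj) le_rfl
    exact hs.insert ((h i).mono_right hle)

variable {n m : ℕ} {F : Fin (n + 1) → α} {F' : Fin (m + 1) → α}

/-- The part of `F (i + 1) ⊓ F' (j + 1)` coming from strictly smaller indices, i.e. the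
denominator of the `(i, j)` piece of the bigraded object attached to a pair of filtrations. -/
def lowerPart [Lattice α] (F : Fin (n + 1) → α) (F' : Fin (m + 1) → α) (i : Fin n) (j : Fin m) :
    α :=
  (F i.castSucc ⊓ F' j.succ) ⊔ (F i.succ ⊓ F' j.castSucc)

theorem lowerPart_le [Lattice α] (hF : Monotone F) (hF' : Monotone F') (i : Fin n) (j : Fin m) :
    lowerPart F F' i j ≤ F i.succ ⊓ F' j.succ :=
  sup_le (inf_le_inf_right _ (hF i.castSucc_le_succ)) (inf_le_inf_left _ (hF' j.castSucc_le_succ))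

theorem sup_inf_succ_eq_lowerPart [Lattice α] [IsModularLattice α] (hF' : Monotone F')
    (i : Fin n) (j : Fin m) :
    (F i.castSucc ⊔ F i.succ ⊓ F' j.castSucc) ⊓ F' j.succ = lowerPart F F' i j := by
  have hle : F i.succ ⊓ F' j.castSucc ≤ F' j.succ := inf_le_right.trans (hF' j.castSucc_le_succ)
  rw [sup_comm, sup_inf_assoc_of_le _ hle, sup_comm, lowerPart]

/-- A splitting of a pair of filtrations: a choice, for every `(i, j)`, of a complement of
`lowerPart F F' i j` inside `F (i + 1) ⊓ F' (j + 1)`. -/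
structure IsSplitting [Lattice α] [OrderBot α] (F : Fin (n + 1) → α) (F' : Fin (m + 1) → α)
    (W : Fin n × Fin m → α) : Prop where
  disjoint : ∀ p, Disjoint (W p) (lowerPart F F' p.1 p.2)
  sup_eq : ∀ p, W p ⊔ lowerPart F F' p.1 p.2 = F p.1.succ ⊓ F' p.2.succ

theorem exists_isSplitting [Lattice α] [BoundedOrder α] [IsModularLattice α]
    [ComplementedLattice α] (hF : Monotone F) (hF' : Monotone F') :
    ∃ W, IsSplitting F F' W := by
  choose W hdisj hsup using fun p : Fin n × Fin m =>
    IsModularLattice.exists_disjoint_and_sup_eq (lowerPart_le hF hF' p.1 p.2)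
  exact ⟨W, fun p => (hdisj p).symm, fun p => (sup_comm _ _).trans (hsup p)⟩

namespace IsSplitting

variable {W : Fin n × Fin m → α}

theorem le_succ_inf_succ [Lattice α] [OrderBot α] (hW : IsSplitting F F' W) (p : Fin n × Fin m) :
    W p ≤ F p.1.succ ⊓ F' p.2.succ :=
  le_sup_left.trans (hW.sup_eq p).le

variable [CompleteLattice α]

theorem inf_le_iSup (hW : IsSplitting F F' W) (hF : F 0 = ⊥) (hF' : F' 0 = ⊥)
    (i : Fin (n + 1)) (j : Fin (m + 1)) :
    F i ⊓ F' j ≤ ⨆ (p : Fin n × Fin m) (_ : p.1.castSucc < i ∧ p.2.castSucc < j), W p := by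
  induction i using Fin.induction generalizing j with
  | zero => simp [hF]
  | succ i ihi =>
    induction j using Fin.induction with
    | zero => simp [hF']
    | succ j ihj =>
      rw [← hW.sup_eq (i, j)]
      refine sup_le (le_iSup₂_of_le (i, j) ⟨i.castSucc_lt_succ, j.castSucc_lt_succ⟩ le_rfl)
        (sup_le ((ihi j.succ).trans ?_) (ihj.trans ?_))
      · exact biSup_mono fun p hp => ⟨hp.1.trans i.castSucc_lt_succ, hp.2⟩
      · exact biSup_mono fun p hp => ⟨hp.1, hp.2.trans j.castSucc_lt_succ⟩

theorem inf_eq_iSup (hW : IsSplitting F F' W) (hF : IsFiniteFiltration F)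
    (hF' : IsFiniteFiltration F') (i : Fin (n + 1)) (j : Fin (m + 1)) :
    F i ⊓ F' j = ⨆ (p : Fin n × Fin m) (_ : p.1.castSucc < i ∧ p.2.castSucc < j), W p :=
  le_antisymm (hW.inf_le_iSup hF.zero_eq_bot hF'.zero_eq_bot i j) <| iSup₂_le fun p hp =>
    (hW.le_succ_inf_succ p).trans <| inf_le_inf (hF.monotone (Fin.castSucc_lt_iff_succ_le.mp hp.1))
      (hF'.monotone (Fin.castSucc_lt_iff_succ_le.mp hp.2))

theorem iSup_eq_top (hW : IsSplitting F F' W) (hF : IsFiniteFiltration F)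
    (hF' : IsFiniteFiltration F') : ⨆ p, W p = ⊤ := by
  have h := hW.inf_eq_iSup hF hF' (Fin.last n) (Fin.last m)
  simpa [hF.last_eq_top, hF'.last_eq_top, Fin.castSucc_lt_last] using h.symm

theorem iSup_lex_lt_le (hW : IsSplitting F F' W) (hF : Monotone F) (hF' : Monotone F')
    (i : Fin n) (j : Fin m) :
    ⨆ q < toLex (i, j), W (ofLex q) ≤ F i.castSucc ⊔ F i.succ ⊓ F' j.castSucc := by
  refine iSup₂_le fun q hq => (hW.le_succ_inf_succ _).trans ?_
  rcases Prod.Lex.lt_iff.mp hq with hi | ⟨hi, hj⟩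
  · exact inf_le_left.trans (le_sup_of_le_left (hF (Fin.succ_le_castSucc_iff.mpr hi)))
  · exact le_sup_of_le_right
      (inf_le_inf (hF (Fin.succ_le_succ_iff.mpr hi.le)) (hF' (Fin.succ_le_castSucc_iff.mpr hj)))

theorem disjoint_iSup_lex_lt [IsModularLattice α] (hW : IsSplitting F F' W) (hF : Monotone F)
    (hF' : Monotone F') (p : Fin n × Fin m) :
    Disjoint (W p) (⨆ q < toLex p, W (ofLex q)) := by
  rw [disjoint_iff_inf_le]
  calc W p ⊓ ⨆ q < toLex p, W (ofLex q)
      ≤ W p ⊓ ((F p.1.castSucc ⊔ F p.1.succ ⊓ F' p.2.castSucc) ⊓ F' p.2.succ) :=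
        le_inf inf_le_left <| le_inf
          (inf_le_right.trans (hW.iSup_lex_lt_le hF hF' p.1 p.2))
          (inf_le_left.trans ((hW.le_succ_inf_succ p).trans inf_le_right))
    _ = W p ⊓ lowerPart F F' p.1 p.2 := by rw [sup_inf_succ_eq_lowerPart hF']
    _ ≤ ⊥ := (hW.disjoint p).le_bot

protected theorem iSupIndep [IsModularLattice α] (hW : IsSplitting F F' W) (hF : Monotone F)
    (hF' : Monotone F') : iSupIndep W :=
  (iSupIndep_of_disjoint_iSup_lt (f := W ∘ ofLex) fun p =>
    hW.disjoint_iSup_lex_lt hF hF' (ofLex p)).comp toLex.injective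

end IsSplitting

end Lattice

section Module

variable {R M N : Type*} [Ring R] [AddCommGroup M] [Module R M] [AddCommGroup N] [Module R N]

theorem nonempty_linearEquiv_quotient_of_disjoint_of_sup_eq {W A B : Submodule R M}
    (hdisj : Disjoint W A) (hsup : W ⊔ A = B) :
    Nonempty (W ≃ₗ[R] B ⧸ A.comap B.subtype) := by
  subst hsup
  have hbot : W.comap W.subtype ⊓ A.comap W.subtype = ⊥ := by
    rwa [comap_subtype_self, top_inf_eq, ← disjoint_iff_comap_eq_bot]
  exact ⟨(quotEquivOfEqBot _ hbot).symm.trans (LinearMap.quotientInfEquivSupQuotient W A)⟩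

theorem nonempty_linearEquiv_quotient_of_map_eq (g : M ≃ₗ[R] N) {A B : Submodule R M}
    {A' B' : Submodule R N} (hA : A.map (g : M →ₗ[R] N) = A') (hB : B.map (g : M →ₗ[R] N) = B') :
    Nonempty ((B ⧸ A.comap B.subtype) ≃ₗ[R] B' ⧸ A'.comap B'.subtype) := by
  refine ⟨Submodule.Quotient.equiv _ _ (g.ofSubmodules B B' hB) ?_⟩
  subst hA
  ext y
  simp [map_equiv_eq_comap_symm]

theorem exists_linearEquiv_map_eq {ι : Type*} {W : ι → Submodule R M} {U : ι → Submodule R N}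
    (hW : iSupIndep W) (hW_top : ⨆ i, W i = ⊤) (hU : iSupIndep U) (hU_top : ⨆ i, U i = ⊤)
    (h : ∀ i, Nonempty (W i ≃ₗ[R] U i)) :
    ∃ g : M ≃ₗ[R] N, ∀ i, (W i).map (g : M →ₗ[R] N) = U i := by
  classical
  have e (i) : W i ≃ₗ[R] U i := (h i).some
  let g : M ≃ₗ[R] N := (hW.linearEquiv hW_top).symm ≪≫ₗ DFinsupp.mapRange.linearEquiv e ≪≫ₗ
    hU.linearEquiv hU_top
  have hg (i) : (g : M →ₗ[R] N) ∘ₗ (W i).subtype = (U i).subtype ∘ₗ (e i : W i →ₗ[R] U i) := by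
    ext x
    simp [g, hW.linearEquiv_symm_apply hW_top x.2]
  refine ⟨g, fun i => ?_⟩
  calc (W i).map (g : M →ₗ[R] N)
      = LinearMap.range ((g : M →ₗ[R] N) ∘ₗ (W i).subtype) := by
        rw [LinearMap.range_comp, range_subtype]
    _ = LinearMap.range ((U i).subtype ∘ₗ (e i : W i →ₗ[R] U i)) := by rw [hg]
    _ = U i := by rw [LinearMap.range_comp, LinearEquiv.range, map_subtype_top]

variable {n m : ℕ} {F : Fin (n + 1) → Submodule R M} {F' : Fin (m + 1) → Submodule R M}
  {G : Fin (n + 1) → Submodule R N} {G' : Fin (m + 1) → Submodule R N}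

/-- The `(i, j)` piece of the bigraded module attached to a pair of filtrations. Its dimension
is the entry `invMatrix F F' i j` when `F` and `F'` are flags in `ℂ^d`. -/
abbrev GradedPiece (F : Fin (n + 1) → Submodule R M) (F' : Fin (m + 1) → Submodule R M)
    (i : Fin n) (j : Fin m) : Type _ :=
  ↥(F i.succ ⊓ F' j.succ) ⧸ (lowerPart F F' i j).comap (F i.succ ⊓ F' j.succ).subtype

theorem map_lowerPart (g : M ≃ₗ[R] N) (i : Fin n) (j : Fin m) :
    (lowerPart F F' i j).map (g : M →ₗ[R] N) =
      lowerPart (fun i => (F i).map (g : M →ₗ[R] N)) (fun j => (F' j).map (g : M →ₗ[R] N)) i j := by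
  simp only [lowerPart, Submodule.map_sup, Submodule.map_inf _ g.injective]

theorem IsSplitting.exists_linearEquiv_map_inf_eq {W : Fin n × Fin m → Submodule R M}
    {U : Fin n × Fin m → Submodule R N} (hW : IsSplitting F F' W) (hU : IsSplitting G G' U)
    (hF : IsFiniteFiltration F) (hF' : IsFiniteFiltration F') (hG : IsFiniteFiltration G)
    (hG' : IsFiniteFiltration G')
    (h : ∀ i j, Nonempty (GradedPiece F F' i j ≃ₗ[R] GradedPiece G G' i j)) :
    ∃ g : M ≃ₗ[R] N, ∀ i j, (F i ⊓ F' j).map (g : M →ₗ[R] N) = G i ⊓ G' j := by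
  have hWU (p) : Nonempty (W p ≃ₗ[R] U p) := by
    obtain ⟨eW⟩ := nonempty_linearEquiv_quotient_of_disjoint_of_sup_eq (hW.disjoint p) (hW.sup_eq p)
    obtain ⟨eU⟩ := nonempty_linearEquiv_quotient_of_disjoint_of_sup_eq (hU.disjoint p) (hU.sup_eq p)
    obtain ⟨e⟩ := h p.1 p.2
    exact ⟨(eW.trans e).trans eU.symm⟩
  obtain ⟨g, hg⟩ := exists_linearEquiv_map_eq (hW.iSupIndep hF.monotone hF'.monotone)
    (hW.iSup_eq_top hF hF') (hU.iSupIndep hG.monotone hG'.monotone) (hU.iSup_eq_top hG hG') hWU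
  refine ⟨g, fun i j => ?_⟩
  simp only [hW.inf_eq_iSup hF hF', hU.inf_eq_iSup hG hG', Submodule.map_iSup, hg]

theorem flag_pairs_sameOrbit_iff_invMatrix_eq_general [IsSemisimpleModule R M]
    [IsSemisimpleModule R N] (hF : IsFiniteFiltration F) (hF' : IsFiniteFiltration F')
    (hG : IsFiniteFiltration G) (hG' : IsFiniteFiltration G') :
    (∃ g : M ≃ₗ[R] N, (∀ i, (F i).map (g : M →ₗ[R] N) = G i) ∧
        ∀ j, (F' j).map (g : M →ₗ[R] N) = G' j) ↔
      ∀ i j, Nonempty (GradedPiece F F' i j ≃ₗ[R] GradedPiece G G' i j) := by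
  constructor
  · rintro ⟨g, hg, hg'⟩ i j
    obtain rfl : (fun i => (F i).map (g : M →ₗ[R] N)) = G := funext hg
    obtain rfl : (fun j => (F' j).map (g : M →ₗ[R] N)) = G' := funext hg'
    exact nonempty_linearEquiv_quotient_of_map_eq g (map_lowerPart g i j)
      (Submodule.map_inf _ g.injective)
  · intro h
    obtain ⟨W, hW⟩ := exists_isSplitting hF.monotone hF'.monotone
    obtain ⟨U, hU⟩ := exists_isSplitting hG.monotone hG'.monotone
    obtain ⟨g, hg⟩ := hW.exists_linearEquiv_map_inf_eq hU hF hF' hG hG' h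
    refine ⟨g, fun i => ?_, fun j => ?_⟩
    · simpa [hF'.last_eq_top, hG'.last_eq_top] using hg i (Fin.last m)
    · simpa [hF.last_eq_top, hG.last_eq_top] using hg (Fin.last n) j

end Module

theorem IsFlag.isFiniteFiltration {d n : ℕ} {F : Fin (n + 1) → Submodule ℂ (Fin d → ℂ)}
    (hF : IsFlag F) : IsFiniteFiltration F :=
  ⟨hF.1, hF.2.1, hF.2.2⟩

/-- Two pairs `(F, F′)` and `(G, G′)`, each consisting of an `n`-step flag and an
`m`-step flag in `ℂ^d`, lie in the same orbit of the diagonal `GL(V)`-action if and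
only if their invariant matrices coincide. -/
theorem flag_pairs_sameOrbit_iff_invMatrix_eq {d n m : ℕ}
    (hd : 0 < d) (hn : 0 < n) (hm : 0 < m)
    (F G : Fin (n + 1) → Submodule ℂ (Fin d → ℂ))
    (F' G' : Fin (m + 1) → Submodule ℂ (Fin d → ℂ))
    (hF : IsFlag F) (hG : IsFlag G) (hF' : IsFlag F') (hG' : IsFlag G') :
    SameOrbit (F, F') (G, G') ↔ ∀ (i : Fin n) (j : Fin m),
      invMatrix F F' i j = invMatrix G G' i j :=
  (flag_pairs_sameOrbit_iff_invMatrix_eq_general hF.isFiniteFiltration hF'.isFiniteFiltration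
    hG.isFiniteFiltration hG'.isFiniteFiltration).trans <| forall₂_congr fun _ _ =>
      FiniteDimensional.nonempty_linearEquiv_iff_finrank_eq
end

section
/- Let d, n, m be positive integers. The set of orbits of the diagonal GL_d(ℂ)-action on pairs (n-step flag, m-step flag) in ℂ^d is finite, and its cardinality equals the number of n×m matrices of non-negative integers with entry sum d, namely the binomial coefficient C(nm + d − 1, d), which is the ℂ-dimension of the space of homogeneous polynomials of degree d in nm variables (= dim S^d(ℂ^n ⊗ ℂ^m)). -/
/-!
The relative position of two flags is the matrix of dimensions of
`(F_i ∩ F'_j) / ((F_{i-1} ∩ F'_j) + (F_i ∩ F'_{j-1}))`. Choosing a basis of a complement for each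
of these quotients yields a basis of `V` in which both flags are coordinate flags, the basis
vectors being sorted into blocks by the positions `(i, j)`. Hence pairs of flags with the same
relative position are exchanged by the automorphism matching two such bases, while every matrix
of total sum `dim V` is realized by sorting the vectors of any basis into blocks of the prescribed
sizes. The orbits are therefore in bijection with these matrices, that is, with multisets of size
`dim V` in `n * m` positions, or equivalently monomials of degree `dim V` in `n * m` variables.
-/

open Module Submodule

/-- The orbit of a pair of flags under the diagonal `GL(V)`-action, within the set of
pairs of an `n`-step flag and an `m`-step flag. -/
def flagOrbit {d n m : ℕ}
    (p : {p : (Fin (n + 1) → Submodule ℂ (Fin d → ℂ)) ×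
          (Fin (m + 1) → Submodule ℂ (Fin d → ℂ)) // IsFlag p.1 ∧ IsFlag p.2}) :
    Set {p : (Fin (n + 1) → Submodule ℂ (Fin d → ℂ)) ×
          (Fin (m + 1) → Submodule ℂ (Fin d → ℂ)) // IsFlag p.1 ∧ IsFlag p.2} :=
  {q | SameOrbit p.val q.val}

open scoped Pointwise

section CoordinateFlags

variable {R M N ι : Type*} [Semiring R] [AddCommMonoid M] [Module R M] [AddCommMonoid N]
  [Module R N] {n m : ℕ}

/-- An `n`-step flag in a module: the counterpart of `IsFlag` over an arbitrary semiring. -/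
def IsStepFlag (F : Fin (n + 1) → Submodule R M) : Prop :=
  Monotone F ∧ F 0 = ⊥ ∧ F (Fin.last n) = ⊤

/-- The coordinate flag of a basis whose vectors are sorted into `n` blocks by `f`: its `a`-th
step is spanned by the first `a` blocks. -/
def coordFlag (b : Basis ι R M) (f : ι → Fin n) (a : Fin (n + 1)) : Submodule R M :=
  span R (b '' {x | (f x).castSucc < a})

theorem IsStepFlag.map {F : Fin (n + 1) → Submodule R M} (hF : IsStepFlag F) (e : M ≃ₗ[R] N) :
    IsStepFlag fun a => (F a).map (e : M →ₗ[R] N) :=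
  ⟨fun _ _ h => map_mono (hF.1 h), by simp [hF.2.1], by simp [hF.2.2]⟩

theorem isStepFlag_coordFlag (b : Basis ι R M) (f : ι → Fin n) : IsStepFlag (coordFlag b f) :=
  ⟨fun _ _ h => span_mono (Set.image_mono fun _ hx => lt_of_lt_of_le hx h),
    by simp [coordFlag], by simp [coordFlag, Fin.castSucc_lt_last, b.span_eq]⟩

theorem map_coordFlag (b : Basis ι R M) (f : ι → Fin n) (e : M ≃ₗ[R] N) :
    (fun a => (coordFlag b f a).map (e : M →ₗ[R] N)) = coordFlag (b.map e) f := by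
  ext1 a
  rw [coordFlag, map_span, ← Set.image_comp, coordFlag]
  rfl

theorem map_equiv_coordFlag (b : Basis ι R M) (c : Basis ι R N) (f : ι → Fin n) :
    (fun a => (coordFlag b f a).map (b.equiv c (Equiv.refl ι) : M →ₗ[R] N)) = coordFlag c f := by
  rw [map_coordFlag, show b.map (b.equiv c (Equiv.refl ι)) = c by ext; simp]

theorem coordFlag_inf_coordFlag (b : Basis ι R M) (f : ι → Fin n) (g : ι → Fin m)
    (a : Fin (n + 1)) (c : Fin (m + 1)) :
    coordFlag b f a ⊓ coordFlag b g c =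
      span R (b '' {x | (f x).castSucc < a ∧ (g x).castSucc < c}) := by
  ext v
  simp only [coordFlag, mem_inf, b.mem_span_image, ← Set.subset_inter_iff, Set.ofPred_and]

end CoordinateFlags

section Grids

variable {n m : ℕ}

theorem card_fiber_add_card_boxes {ι : Type*} [Finite ι] (f : ι → Fin n) (g : ι → Fin m)
    (i : Fin n) (j : Fin m) :
    Nat.card {x // f x = i ∧ g x = j} +
        (Nat.card {x // (f x).castSucc < i.castSucc ∧ (g x).castSucc < j.succ} +
          Nat.card {x // (f x).castSucc < i.succ ∧ (g x).castSucc < j.castSucc}) =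
      Nat.card {x // (f x).castSucc < i.succ ∧ (g x).castSucc < j.succ} +
        Nat.card {x // (f x).castSucc < i.castSucc ∧ (g x).castSucc < j.castSucc} := by
  have := Fintype.ofFinite ι
  simp only [Nat.card_eq_fintype_card, Fintype.card_subtype, Finset.card_filter,
    ← Finset.sum_add_distrib]
  refine Finset.sum_congr rfl fun x _ => ?_
  simp only [Fin.lt_def, Fin.ext_iff, Fin.val_castSucc, Fin.val_succ]
  split_ifs <;> omega

theorem sum_succ_sub_castSucc {G : Type*} [AddCommGroup G] (r : Fin (n + 1) → G) :
    ∑ i : Fin n, (r i.succ - r i.castSucc) = r (Fin.last n) - r 0 := by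
  rw [Finset.sum_sub_distrib, sub_eq_sub_iff_add_eq_add, add_comm, ← Fin.sum_univ_succ,
    Fin.sum_univ_castSucc, add_comm]

theorem sum_sum_eq_of_mixed_difference {A : Fin n → Fin m → ℕ} {r : Fin (n + 1) → Fin (m + 1) → ℕ}
    (hleft : ∀ c, r 0 c = 0) (hright : ∀ a, r a 0 = 0)
    (hA : ∀ i j, A i j + (r i.castSucc j.succ + r i.succ j.castSucc) =
      r i.succ j.succ + r i.castSucc j.castSucc) :
    ∑ i, ∑ j, A i j = r (Fin.last n) (Fin.last m) := by
  have hrow (i : Fin n) : ∑ j, (A i j : ℤ) =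
      (r i.succ (Fin.last m) : ℤ) - r i.castSucc (Fin.last m) := by
    calc ∑ j, (A i j : ℤ)
      _ = ∑ j : Fin m, (((r i.succ j.succ : ℤ) - r i.castSucc j.succ) -
            (r i.succ j.castSucc - r i.castSucc j.castSucc)) :=
          Finset.sum_congr rfl fun j _ => by have := hA i j; omega
      _ = (r i.succ (Fin.last m) : ℤ) - r i.castSucc (Fin.last m) := by
          rw [sum_succ_sub_castSucc fun c => (r i.succ c : ℤ) - r i.castSucc c]
          simp [hright]
  zify
  rw [Finset.sum_congr rfl fun i _ => hrow i,
    sum_succ_sub_castSucc fun a => (r a (Fin.last m) : ℤ), hleft]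
  simp

theorem inf_le_of_le_sup_crossing {L : Type*} [Lattice L] [OrderBot L]
    {F : Fin (n + 1) → L} {F' : Fin (m + 1) → L} {X : Fin (n + 1) → Fin (m + 1) → L}
    {C : Fin n → Fin m → L} (hF : F 0 = ⊥) (hF' : F' 0 = ⊥)
    (hC : ∀ i j, F i.succ ⊓ F' j.succ ≤
      (F i.castSucc ⊓ F' j.succ ⊔ F i.succ ⊓ F' j.castSucc) ⊔ C i j)
    (hX : Monotone X) (hX' : ∀ a, Monotone (X a)) (hCX : ∀ i j, C i j ≤ X i.succ j.succ)
    (a : Fin (n + 1)) (c : Fin (m + 1)) : F a ⊓ F' c ≤ X a c := by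
  induction a using Fin.induction generalizing c with
  | zero => simp [hF]
  | succ i ihi =>
    induction c using Fin.induction with
    | zero => simp [hF']
    | succ j ihj =>
      exact (hC i j).trans <| sup_le
        (sup_le ((ihi _).trans (hX i.castSucc_le_succ _))
          (ihj.trans (hX' _ j.castSucc_le_succ)))
        (hCX i j)

end Grids

section RelativePosition

variable {K V ι : Type*} [DivisionRing K] [AddCommGroup V] [Module K V] {n m : ℕ}
  {F : Fin (n + 1) → Submodule K V} {F' : Fin (m + 1) → Submodule K V}

/-- The relative position of two flags: the counterpart of `invMatrix` over an arbitrary division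
ring. -/
noncomputable def relPosition (F : Fin (n + 1) → Submodule K V) (F' : Fin (m + 1) → Submodule K V)
    (i : Fin n) (j : Fin m) : ℕ :=
  finrank K (↥(F i.succ ⊓ F' j.succ) ⧸
    (F i.castSucc ⊓ F' j.succ ⊔ F i.succ ⊓ F' j.castSucc).submoduleOf (F i.succ ⊓ F' j.succ))

theorem sup_crossing_le (hF : Monotone F) (hF' : Monotone F') (i : Fin n) (j : Fin m) :
    F i.castSucc ⊓ F' j.succ ⊔ F i.succ ⊓ F' j.castSucc ≤ F i.succ ⊓ F' j.succ :=
  sup_le (inf_le_inf_right _ (hF i.castSucc_le_succ)) (inf_le_inf_left _ (hF' j.castSucc_le_succ))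

theorem finrank_coordFlag_inf_coordFlag [Finite ι] (b : Basis ι K V) (f : ι → Fin n)
    (g : ι → Fin m) (a : Fin (n + 1)) (c : Fin (m + 1)) :
    finrank K ↥(coordFlag b f a ⊓ coordFlag b g c) =
      Nat.card {x // (f x).castSucc < a ∧ (g x).castSucc < c} := by
  have := Fintype.ofFinite {x | (f x).castSucc < a ∧ (g x).castSucc < c}
  rw [coordFlag_inf_coordFlag, Set.image_eq_range]
  exact (finrank_span_eq_card (b.linearIndependent.comp _ Subtype.val_injective)).trans
    Nat.card_eq_fintype_card.symm

section FiniteDimensional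

variable [FiniteDimensional K V]

theorem relPosition_add_finrank_sup (hF : Monotone F) (hF' : Monotone F') (i : Fin n)
    (j : Fin m) :
    relPosition F F' i j +
        finrank K ↥(F i.castSucc ⊓ F' j.succ ⊔ F i.succ ⊓ F' j.castSucc) =
      finrank K ↥(F i.succ ⊓ F' j.succ) := by
  rw [← (submoduleOfEquivOfLe (sup_crossing_le hF hF' i j)).finrank_eq]
  exact finrank_quotient_add_finrank _

theorem relPosition_add_finrank_add_finrank (hF : Monotone F) (hF' : Monotone F') (i : Fin n)
    (j : Fin m) :
    relPosition F F' i j +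
        (finrank K ↥(F i.castSucc ⊓ F' j.succ) + finrank K ↥(F i.succ ⊓ F' j.castSucc)) =
      finrank K ↥(F i.succ ⊓ F' j.succ) + finrank K ↥(F i.castSucc ⊓ F' j.castSucc) := by
  have hinf : F i.castSucc ⊓ F' j.succ ⊓ (F i.succ ⊓ F' j.castSucc) =
      F i.castSucc ⊓ F' j.castSucc := by
    rw [inf_inf_inf_comm, inf_eq_left.2 (hF i.castSucc_le_succ),
      inf_eq_right.2 (hF' j.castSucc_le_succ)]
  rw [← finrank_sup_add_finrank_inf_eq, hinf, ← add_assoc, relPosition_add_finrank_sup hF hF']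

theorem sum_relPosition (hF : IsStepFlag F) (hF' : IsStepFlag F') :
    ∑ i, ∑ j, relPosition F F' i j = finrank K V := by
  rw [sum_sum_eq_of_mixed_difference (r := fun a c => finrank K ↥(F a ⊓ F' c)),
    hF.2.2, hF'.2.2, inf_top_eq, finrank_top]
  · simp [hF.2.1]
  · simp [hF'.2.1]
  · exact relPosition_add_finrank_add_finrank hF.1 hF'.1

theorem exists_complement_crossing (hF : Monotone F) (hF' : Monotone F') (i : Fin n)
    (j : Fin m) :
    ∃ C : Submodule K V, finrank K C = relPosition F F' i j ∧
      (F i.castSucc ⊓ F' j.succ ⊔ F i.succ ⊓ F' j.castSucc) ⊔ C = F i.succ ⊓ F' j.succ := by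
  obtain ⟨C, hdisj, hsup⟩ :=
    IsModularLattice.exists_disjoint_and_sup_eq (sup_crossing_le hF hF' i j)
  have hrank := finrank_sup_add_finrank_inf_eq
    (F i.castSucc ⊓ F' j.succ ⊔ F i.succ ⊓ F' j.castSucc) C
  rw [hsup, hdisj.eq_bot, finrank_bot, ← relPosition_add_finrank_sup hF hF'] at hrank
  exact ⟨C, by omega, hsup⟩

theorem exists_family_inf_eq_span (hF : IsStepFlag F) (hF' : IsStepFlag F') :
    ∃ v : (Σ s : Fin n × Fin m, Fin (relPosition F F' s.1 s.2)) → V, ∀ a c,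
      F a ⊓ F' c = span K (v '' {x | x.1.1.castSucc < a ∧ x.1.2.castSucc < c}) := by
  choose C hrank hsup using exists_complement_crossing hF.1 hF'.1
  let b (s : Fin n × Fin m) := finBasisOfFinrankEq K (C s.1 s.2) (hrank s.1 s.2)
  let v (x : Σ s : Fin n × Fin m, Fin (relPosition F F' s.1 s.2)) : V := b x.1 x.2
  refine ⟨v, fun a c => le_antisymm ?_ (span_le.2 ?_)⟩
  · refine inf_le_of_le_sup_crossing
      (X := fun a c => span K (v '' {x | x.1.1.castSucc < a ∧ x.1.2.castSucc < c}))
      hF.2.1 hF'.2.1 (fun i j => (hsup i j).ge)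
      (fun _ _ h _ => span_mono <| Set.image_mono fun _ hx => ⟨hx.1.trans_le h, hx.2⟩)
      (fun _ _ _ h => span_mono <| Set.image_mono fun _ hx => ⟨hx.1, hx.2.trans_le h⟩)
      (fun i j => ?_) a c
    calc C i j
      _ = span K (Set.range fun k => (b (i, j) k : V)) := by
          rw [Set.range_comp' Subtype.val, ← coe_subtype, ← map_span, (b (i, j)).span_eq,
            Submodule.map_top, range_subtype]
      _ ≤ span K (v '' {x | x.1.1.castSucc < i.succ ∧ x.1.2.castSucc < j.succ}) :=
          span_mono <| Set.range_subset_iff.2 fun k =>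
            ⟨⟨(i, j), k⟩, ⟨Fin.castSucc_lt_succ, Fin.castSucc_lt_succ⟩, rfl⟩
  · rintro _ ⟨⟨⟨i, j⟩, k⟩, ⟨hi, hj⟩, rfl⟩
    have hmem : (b (i, j) k : V) ∈ F i.succ ⊓ F' j.succ :=
      hsup i j ▸ mem_sup_right (b (i, j) k).2
    exact ⟨hF.1 (Fin.castSucc_lt_iff_succ_le.1 hi) hmem.1,
      hF'.1 (Fin.castSucc_lt_iff_succ_le.1 hj) hmem.2⟩

theorem exists_basis_coordFlag_eq (hF : IsStepFlag F) (hF' : IsStepFlag F') :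
    ∃ b : Basis (Σ s : Fin n × Fin m, Fin (relPosition F F' s.1 s.2)) K V,
      coordFlag b (fun x => x.1.1) = F ∧ coordFlag b (fun x => x.1.2) = F' := by
  obtain ⟨v, hv⟩ := exists_family_inf_eq_span hF hF'
  have hspan : ⊤ ≤ span K (Set.range v) := by
    simpa [hF.2.2, hF'.2.2, Fin.castSucc_lt_last] using (hv (Fin.last n) (Fin.last m)).le
  have hcard : Fintype.card (Σ s : Fin n × Fin m, Fin (relPosition F F' s.1 s.2)) =
      finrank K V := by
    simp [← sum_relPosition hF hF', Fintype.sum_prod_type]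
  refine ⟨basisOfTopLeSpanOfCardEqFinrank v hspan hcard, funext fun a => ?_, funext fun c => ?_⟩
  · simpa [coordFlag, hF'.2.2, Fin.castSucc_lt_last] using (hv a (Fin.last m)).symm
  · simpa [coordFlag, hF.2.2, Fin.castSucc_lt_last] using (hv (Fin.last n) c).symm

end FiniteDimensional

theorem relPosition_coordFlag [Finite ι] (b : Basis ι K V) (f : ι → Fin n) (g : ι → Fin m)
    (i : Fin n) (j : Fin m) :
    relPosition (coordFlag b f) (coordFlag b g) i j = Nat.card {x // f x = i ∧ g x = j} := by
  have := Module.Finite.of_basis b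
  have hrank := relPosition_add_finrank_add_finrank (isStepFlag_coordFlag b f).1
    (isStepFlag_coordFlag b g).1 i j
  simp only [finrank_coordFlag_inf_coordFlag] at hrank
  have hcard := card_fiber_add_card_boxes f g i j
  omega

theorem relPosition_map {W : Type*} [AddCommGroup W] [Module K W] [FiniteDimensional K V]
    (hF : IsStepFlag F) (hF' : IsStepFlag F') (e : V ≃ₗ[K] W) :
    relPosition (fun a => (F a).map (e : V →ₗ[K] W)) (fun c => (F' c).map (e : V →ₗ[K] W)) =
      relPosition F F' := by
  obtain ⟨b, hb, hb'⟩ := exists_basis_coordFlag_eq hF hF'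
  have hbe := map_coordFlag b (fun x => x.1.1) e
  have hbe' := map_coordFlag b (fun x => x.1.2) e
  rw [hb] at hbe
  rw [hb'] at hbe'
  ext i j
  rw [hbe, hbe', relPosition_coordFlag, ← relPosition_coordFlag b, hb, hb']

end RelativePosition

section Orbits

/-- The pairs of an `n`-step and an `m`-step flag in `V`, with the diagonal action of the group
`V ≃ₗ[K] V` of linear automorphisms of `V`. -/
def stepFlagPairs (K V : Type*) [Semiring K] [AddCommMonoid V] [Module K V] (n m : ℕ) :
    SubMulAction (V ≃ₗ[K] V)
      ((Fin (n + 1) → Submodule K V) × (Fin (m + 1) → Submodule K V)) where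
  carrier := {p | IsStepFlag p.1 ∧ IsStepFlag p.2}
  smul_mem' g _ hp := ⟨hp.1.map g, hp.2.map g⟩

variable {K V : Type*} [DivisionRing K] [AddCommGroup V] [Module K V] [FiniteDimensional K V]
  {n m : ℕ}

theorem relPosition_smul (g : V ≃ₗ[K] V) (p : stepFlagPairs K V n m) :
    relPosition (g • p).1.1 (g • p).1.2 = relPosition p.1.1 p.1.2 :=
  relPosition_map p.2.1 p.2.2 g

theorem exists_smul_eq_of_relPosition_eq {p q : stepFlagPairs K V n m}
    (h : relPosition p.1.1 p.1.2 = relPosition q.1.1 q.1.2) : ∃ g : V ≃ₗ[K] V, g • p = q := by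
  obtain ⟨b, hb, hb'⟩ := exists_basis_coordFlag_eq p.2.1 p.2.2
  have hq := exists_basis_coordFlag_eq q.2.1 q.2.2
  rw [← h] at hq
  obtain ⟨c, hc, hc'⟩ := hq
  have hmap := map_equiv_coordFlag b c fun x => x.1.1
  have hmap' := map_equiv_coordFlag b c fun x => x.1.2
  rw [hb, hc] at hmap
  rw [hb', hc'] at hmap'
  exact ⟨b.equiv c (Equiv.refl _), Subtype.ext (Prod.ext hmap hmap')⟩

theorem mem_orbit_iff_relPosition_eq {p q : stepFlagPairs K V n m} :
    p ∈ MulAction.orbit (V ≃ₗ[K] V) q ↔ relPosition p.1.1 p.1.2 = relPosition q.1.1 q.1.2 := by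
  refine ⟨?_, fun h => exists_smul_eq_of_relPosition_eq h.symm⟩
  rintro ⟨g, rfl⟩
  exact relPosition_smul g q

theorem exists_relPosition_eq (A : Fin n → Fin m → ℕ) (hA : ∑ i, ∑ j, A i j = finrank K V) :
    ∃ p : stepFlagPairs K V n m, relPosition p.1.1 p.1.2 = A := by
  let e : Fin (finrank K V) ≃ Σ s : Fin n × Fin m, Fin (A s.1 s.2) :=
    Fintype.equivOfCardEq (by simp [← hA, Fintype.sum_prod_type])
  let b := (finBasis K V).reindex e
  refine ⟨⟨(coordFlag b fun x => x.1.1, coordFlag b fun x => x.1.2),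
    isStepFlag_coordFlag b _, isStepFlag_coordFlag b _⟩, ?_⟩
  ext i j
  rw [relPosition_coordFlag]
  let fiberEquiv : {x : Σ s : Fin n × Fin m, Fin (A s.1 s.2) // x.1.1 = i ∧ x.1.2 = j} ≃
      Fin (A i j) :=
    (Equiv.subtypeEquivRight fun _ => Prod.ext_iff.symm).trans (Equiv.sigmaSubtype (i, j))
  exact (Nat.card_congr fiberEquiv).trans (Nat.card_fin _)

/-- The bijection between orbits of pairs of flags and matrices of total sum `dim V` given by the
relative position. -/
noncomputable def orbitsEquivMatrices (K V : Type*) [DivisionRing K] [AddCommGroup V] [Module K V]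
    [FiniteDimensional K V] (n m : ℕ) :
    Set.range (MulAction.orbit (V ≃ₗ[K] V) : stepFlagPairs K V n m → Set _) ≃
      {A : Fin n → Fin m → ℕ // ∑ i, ∑ j, A i j = finrank K V} :=
  let position (p : stepFlagPairs K V n m) :
      {A : Fin n → Fin m → ℕ // ∑ i, ∑ j, A i j = finrank K V} :=
    ⟨relPosition p.1.1 p.1.2, sum_relPosition p.2.1 p.2.2⟩
  (Setoid.quotientKerEquivRange _).symm.trans <|
    (Quotient.congrRight fun _ _ => by
      simp only [Setoid.ker_def, position, Subtype.mk.injEq, MulAction.orbit_eq_iff,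
        mem_orbit_iff_relPosition_eq]).trans <|
    Setoid.quotientKerEquivOfSurjective position fun A =>
      (exists_relPosition_eq A.1 A.2).imp fun _ hp => Subtype.ext hp

end Orbits

section Monomials

/-- Matrices with entry sum `d` are the multiplicity functions of multisets of `d` positions. -/
noncomputable def matricesEquivSym (α β : Type*) [Fintype α] [Fintype β] [DecidableEq α]
    [DecidableEq β] (d : ℕ) :
    {A : α → β → ℕ // ∑ i, ∑ j, A i j = d} ≃ Sym (α × β) d :=
  ((Equiv.curry α β ℕ).symm.subtypeEquiv fun A => by simp [Fintype.sum_prod_type]).trans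
    (Sym.equivNatSumOfFintype (α × β) d).symm

theorem card_matrices_sum_eq (α β : Type*) [Fintype α] [Fintype β] (d : ℕ) :
    Nat.card {A : α → β → ℕ // ∑ i, ∑ j, A i j = d} =
      (Fintype.card α * Fintype.card β + d - 1).choose d := by
  classical
  rw [Nat.card_congr (matricesEquivSym α β d), Nat.card_eq_fintype_card, Sym.card_sym_eq_choose,
    Fintype.card_prod]

theorem finrank_homogeneousSubmodule (σ R : Type*) [Fintype σ] [CommSemiring R]
    [StrongRankCondition R] (d : ℕ) :
    finrank R (MvPolynomial.homogeneousSubmodule σ R d) = (Fintype.card σ + d - 1).choose d := by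
  classical
  let e : Sym σ d ≃ {s : σ →₀ ℕ | s.degree = d} := Sym.equivNatSum σ d
  have := Fintype.ofEquiv _ e
  rw [MvPolynomial.homogeneousSubmodule_eq_finsupp_supported,
    (AddMonoidAlgebra.supportedEquivFinsupp {s : σ →₀ ℕ | s.degree = d}).finrank_eq,
    finrank_finsupp_self, ← Fintype.card_congr e, Sym.card_sym_eq_choose]

end Monomials

theorem flag_pair_orbits_finite_card_general (K V : Type*) [Field K] [AddCommGroup V] [Module K V]
    [FiniteDimensional K V] {d : ℕ} (hd : finrank K V = d) (n m : ℕ) :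
    (Set.range (MulAction.orbit (V ≃ₗ[K] V) : stepFlagPairs K V n m → Set _)).Finite ∧
    Nat.card (Set.range (MulAction.orbit (V ≃ₗ[K] V) : stepFlagPairs K V n m → Set _)) =
      Nat.card {A : Fin n → Fin m → ℕ // ∑ i, ∑ j, A i j = d} ∧
    Nat.card (Set.range (MulAction.orbit (V ≃ₗ[K] V) : stepFlagPairs K V n m → Set _)) =
      (n * m + d - 1).choose d ∧
    Nat.card (Set.range (MulAction.orbit (V ≃ₗ[K] V) : stepFlagPairs K V n m → Set _)) =
      finrank K (MvPolynomial.homogeneousSubmodule (Fin n × Fin m) K d) := by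
  subst hd
  have hcard := Nat.card_congr (orbitsEquivMatrices K V n m)
  have hchoose := hcard.trans (card_matrices_sum_eq (Fin n) (Fin m) (finrank K V))
  rw [Fintype.card_fin, Fintype.card_fin] at hchoose
  refine ⟨?_, hcard, hchoose, ?_⟩
  · exact Set.finite_coe_iff.1 <| Finite.of_equiv _
      ((orbitsEquivMatrices K V n m).trans (matricesEquivSym _ _ _)).symm
  · rw [hchoose, finrank_homogeneousSubmodule, Fintype.card_prod, Fintype.card_fin,
      Fintype.card_fin]

theorem flagOrbit_eq_orbit (d n m : ℕ) :
    flagOrbit (d := d) (n := n) (m := m) =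
      (MulAction.orbit ((Fin d → ℂ) ≃ₗ[ℂ] (Fin d → ℂ)) :
        stepFlagPairs ℂ (Fin d → ℂ) n m → Set _) := by
  ext p q
  exact exists_congr fun g =>
    ⟨fun h => Subtype.ext (Prod.ext (funext h.1) (funext h.2)),
      fun h => ⟨congrFun (congrArg (·.1.1) h), congrFun (congrArg (·.1.2) h)⟩⟩

/-- The set of orbits of the diagonal `GL_d(ℂ)`-action on pairs (n-step flag, m-step
flag) in `ℂ^d` is finite, and its cardinality equals the number of `n × m` matrices of
non-negative integers with entry sum `d`, namely the binomial coefficient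
`C(nm + d − 1, d)`, which is the `ℂ`-dimension of the space of homogeneous polynomials
of degree `d` in `nm` variables (= `dim S^d(ℂ^n ⊗ ℂ^m)`). -/
theorem flag_pair_orbits_finite_card {d n m : ℕ}
    (hd : 0 < d) (hn : 0 < n) (hm : 0 < m) :
    (Set.range (flagOrbit (d := d) (n := n) (m := m))).Finite ∧
    Nat.card (Set.range (flagOrbit (d := d) (n := n) (m := m))) =
      Nat.card {A : Fin n → Fin m → ℕ // ∑ i, ∑ j, A i j = d} ∧
    Nat.card (Set.range (flagOrbit (d := d) (n := n) (m := m))) =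
      (n * m + d - 1).choose d ∧
    Nat.card (Set.range (flagOrbit (d := d) (n := n) (m := m))) =
      Module.finrank ℂ (MvPolynomial.homogeneousSubmodule (Fin n × Fin m) ℂ d) := by
  rw [flagOrbit_eq_orbit]
  exact flag_pair_orbits_finite_card_general ℂ (Fin d → ℂ) (finrank_fin_fun ℂ) n m
end

section
/- Let d, n, m, k, a, b be positive integers, x ∈ End_ℂ(ℂ^d), F an x-compatible n-step flag and F″ an x-compatible k-step flag in ℂ^d. Then the following are equivalent: (i) x^a = 0, x^b = 0, and there exists an x-compatible m-step flag F′ in ℂ^d; (ii) x^{min(a,m,b)} = 0. (This is the set-theoretic composition identity ^nZ^m_a ∘ ^mZ^k_b = ^nZ^k_{min(a,m,b)}, where ^nZ^m_a is the set of triples (x, F, F′) with x^a = 0, F an x-compatible n-step flag and F′ an x-compatible m-step flag, and ∘ is composition of correspondences over the shared pair (x, F′).) -/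
open Module Submodule

/-- A flag `(F_i)` is `x`-compatible if `x(F_i) ⊆ F_{i−1}` for all `i = 1, …, n`. -/
def Compatible {d n : ℕ} (x : Module.End ℂ (Fin d → ℂ))
    (F : Fin (n + 1) → Submodule ℂ (Fin d → ℂ)) : Prop :=
  ∀ i : Fin n, (F i.succ).map x ≤ F i.castSucc

/-!
An `x`-compatible flag satisfies `F_i ⊆ ker x^i`, by induction on `i`, so an `m`-step one forces
`x^m = 0`. Conversely, if `x^m = 0` then the kernels `ker x^i` themselves form such a flag. Hence
the existence of the intermediate flag says exactly that `x^m = 0`.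
-/

section CompatibleFlag

variable {R M : Type*} [Semiring R] [AddCommMonoid M] [Module R M] {m : ℕ}

/-- An `m`-step flag of submodules that is compatible with the endomorphism `x`; over `ℂ^d` this is
`IsFlag F ∧ Compatible x F`. -/
structure IsCompatibleFlag (x : End R M) (F : Fin (m + 1) → Submodule R M) : Prop where
  monotone : Monotone F
  zero_eq_bot : F 0 = ⊥
  last_eq_top : F (Fin.last m) = ⊤
  map_succ_le (i : Fin m) : (F i.succ).map x ≤ F i.castSucc

theorem ker_pow_succ_eq_comap (x : End R M) (i : ℕ) :
    LinearMap.ker (x ^ (i + 1)) = (LinearMap.ker (x ^ i)).comap x := by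
  rw [pow_succ, Module.End.mul_eq_comp, LinearMap.ker_comp]

theorem IsCompatibleFlag.le_ker_pow {x : End R M} {F : Fin (m + 1) → Submodule R M}
    (hF : IsCompatibleFlag x F) (i : Fin (m + 1)) : F i ≤ LinearMap.ker (x ^ (i : ℕ)) := by
  induction i using Fin.induction with
  | zero => exact hF.zero_eq_bot.trans_le bot_le
  | succ i ih =>
    rw [Fin.val_succ, ker_pow_succ_eq_comap, ← map_le_iff_le_comap]
    exact (hF.map_succ_le i).trans ih

theorem IsCompatibleFlag.pow_eq_zero {x : End R M} {F : Fin (m + 1) → Submodule R M}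
    (hF : IsCompatibleFlag x F) : x ^ m = 0 := by
  rw [← LinearMap.ker_eq_top, ← top_le_iff, ← hF.last_eq_top]
  exact hF.le_ker_pow (Fin.last m)

theorem isCompatibleFlag_ker_pow {x : End R M} (hx : x ^ m = 0) :
    IsCompatibleFlag x fun i : Fin (m + 1) ↦ LinearMap.ker (x ^ (i : ℕ)) where
  monotone _ _ hij := x.iterateKer.monotone hij
  zero_eq_bot := LinearMap.ker_id
  last_eq_top := LinearMap.ker_eq_top.mpr hx
  map_succ_le i := map_le_iff_le_comap.mpr (ker_pow_succ_eq_comap x i).le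

theorem exists_isCompatibleFlag_iff_pow_eq_zero {x : End R M} :
    (∃ F : Fin (m + 1) → Submodule R M, IsCompatibleFlag x F) ↔ x ^ m = 0 :=
  ⟨fun ⟨_, hF⟩ ↦ hF.pow_eq_zero, fun hx ↦ ⟨_, isCompatibleFlag_ker_pow hx⟩⟩

end CompatibleFlag

theorem isCompatibleFlag_iff {d n : ℕ} {x : End ℂ (Fin d → ℂ)}
    {F : Fin (n + 1) → Submodule ℂ (Fin d → ℂ)} :
    IsCompatibleFlag x F ↔ IsFlag F ∧ Compatible x F :=
  ⟨fun h ↦ ⟨⟨h.monotone, h.zero_eq_bot, h.last_eq_top⟩, h.map_succ_le⟩,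
    fun ⟨⟨hmono, hbot, htop⟩, hx⟩ ↦ ⟨hmono, hbot, htop, hx⟩⟩

theorem pow_min_eq_zero_iff {M₀ : Type*} [MonoidWithZero M₀] {x : M₀} {a b : ℕ} :
    x ^ min a b = 0 ↔ x ^ a = 0 ∧ x ^ b = 0 := by
  refine ⟨fun h ↦ ⟨pow_eq_zero_of_le (min_le_left a b) h, pow_eq_zero_of_le (min_le_right a b) h⟩,
    fun ⟨ha, hb⟩ ↦ ?_⟩
  rcases min_choice a b with h | h <;> rwa [h]

theorem composition_identity_nZma_mZkb_general {R M : Type*} [Semiring R] [AddCommMonoid M]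
    [Module R M] {m a b : ℕ} (x : End R M) :
    (x ^ a = 0 ∧ x ^ b = 0 ∧ ∃ F' : Fin (m + 1) → Submodule R M, IsCompatibleFlag x F') ↔
      x ^ min a (min m b) = 0 := by
  rw [exists_isCompatibleFlag_iff_pow_eq_zero, pow_min_eq_zero_iff, pow_min_eq_zero_iff,
    and_comm (a := x ^ b = 0)]

/-- The set-theoretic composition identity `ⁿZᵐ_a ∘ ᵐZᵏ_b = ⁿZᵏ_{min(a,m,b)}`:
given `x`, an `x`-compatible `n`-step flag `F` and an `x`-compatible `k`-step flag
`F″`, one has `x^a = 0 ∧ x^b = 0 ∧ (∃ x`-compatible `m`-step flag`)` if and only if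
`x^{min(a,m,b)} = 0`. -/
theorem composition_identity_nZma_mZkb {d n m k a b : ℕ}
    (hd : 0 < d) (hn : 0 < n) (hm : 0 < m) (hk : 0 < k) (ha : 0 < a) (hb : 0 < b)
    (x : Module.End ℂ (Fin d → ℂ))
    (F : Fin (n + 1) → Submodule ℂ (Fin d → ℂ)) (hF : IsFlag F) (hxF : Compatible x F)
    (F'' : Fin (k + 1) → Submodule ℂ (Fin d → ℂ)) (hF'' : IsFlag F'')
    (hxF'' : Compatible x F'') :
    (x ^ a = 0 ∧ x ^ b = 0 ∧
        ∃ F' : Fin (m + 1) → Submodule ℂ (Fin d → ℂ), IsFlag F' ∧ Compatible x F') ↔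
      x ^ min a (min m b) = 0 := by
  simpa only [isCompatibleFlag_iff] using composition_identity_nZma_mZkb_general x
end

section
/- Let d, n, m be positive integers and x ∈ End_ℂ(ℂ^d). If F is an x-compatible n-step flag and F″ is an x-compatible m-step flag in ℂ^d, then there exists an x-compatible complete flag B in ℂ^d. (Consequently the set-theoretic composition ^nW ∘̂ ^mW, composing ^nW = ^nM ×_{N_n} Ñ and Ñ ×_{N_m} ^mM over the shared complete-flag factor, equals ^nZ^m = {(x, F, F″) : F an x-compatible n-step flag, F″ an x-compatible m-step flag}.) -/
open Module Submodule

/-- A complete flag in `ℂ^d`: a `d`-step flag with `dim_ℂ F_i = i` for all `i`. -/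
def IsCompleteFlag {d : ℕ} (F : Fin (d + 1) → Submodule ℂ (Fin d → ℂ)) : Prop :=
  IsFlag F ∧ ∀ i : Fin (d + 1), Module.finrank ℂ (F i) = (i : ℕ)

/-!
An endomorphism `x` with a compatible flag is nilpotent. If `x` is nilpotent, then `x N < N` for
every nonzero `x`-stable submodule `N`, so some `P ⋖ N` contains `x N`; this `P` is again `x`-stable
since `x P ≤ x N ≤ P`. Descending in this way from the whole module to `⊥` gives a compatible
composition series.
-/

section Nilpotent

variable {R M : Type*} [Semiring R] [AddCommMonoid M] [Module R M] {x : Module.End R M}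

lemma isNilpotent_of_map_succ_le_castSucc {n : ℕ} {F : Fin (n + 1) → Submodule R M}
    (hbot : F 0 = ⊥) (htop : F (Fin.last n) = ⊤)
    (hF : ∀ i : Fin n, (F i.succ).map x ≤ F i.castSucc) : IsNilpotent x := by
  have le_ker_pow (i : Fin (n + 1)) : F i ≤ LinearMap.ker (x ^ (i : ℕ)) := by
    induction i using Fin.induction with
    | zero => exact hbot.trans_le bot_le
    | succ i ih =>
      rw [Fin.val_succ, pow_succ, Module.End.mul_eq_comp, LinearMap.ker_comp, ← map_le_iff_le_comap]
      exact (hF i).trans ih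
  refine ⟨n, LinearMap.ker_eq_top.mp (top_le_iff.mp ?_)⟩
  simpa only [htop, Fin.val_last] using le_ker_pow (Fin.last n)

lemma eq_bot_of_le_map_of_isNilpotent (hx : IsNilpotent x) {N : Submodule R M}
    (hN : N ≤ N.map x) : N = ⊥ := by
  have le_map_pow (k : ℕ) : N ≤ N.map (x ^ k) := by
    induction k with
    | zero => exact (Submodule.map_id N).ge
    | succ k ih =>
      rw [pow_succ, Module.End.mul_eq_comp, Submodule.map_comp]
      exact ih.trans (map_mono hN)
  obtain ⟨k, hk⟩ := hx
  simpa only [hk, Submodule.map_zero, le_bot_iff] using le_map_pow k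

lemma exists_covBy_map_le_of_isNilpotent [IsNoetherian R M] (hx : IsNilpotent x)
    {N : Submodule R M} (hN : N.map x ≤ N) (hne : N ≠ ⊥) : ∃ P, P ⋖ N ∧ N.map x ≤ P := by
  have hlt : N.map x < N := lt_of_le_not_ge hN fun h ↦ hne (eq_bot_of_le_map_of_isNilpotent hx h)
  obtain ⟨P, hle, hcov⟩ := exists_le_covBy_of_lt hlt
  exact ⟨P, hcov, hle⟩

/-- The relation between consecutive terms `P`, `N` of a composition series compatible with `x`:
`N` covers `P` and `x` maps `N` into `P`. A `RelSeries` of this relation from `⊥` to `⊤` is the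
module-theoretic form of an `x`-compatible complete flag. -/
def compatibleCovBy (x : Module.End R M) : SetRel (Submodule R M) (Submodule R M) :=
  {p | p.1 ⋖ p.2 ∧ p.2.map x ≤ p.1}

lemma exists_relSeries_compatibleCovBy [IsNoetherian R M] [IsArtinian R M] (hx : IsNilpotent x)
    {N : Submodule R M} (hN : N.map x ≤ N) :
    ∃ s : RelSeries (compatibleCovBy x), s.head = ⊥ ∧ s.last = N := by
  induction N using WellFoundedLT.induction with
  | ind N ih =>
    obtain rfl | hne := eq_or_ne N ⊥
    · exact ⟨RelSeries.singleton _ ⊥, rfl, rfl⟩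
    obtain ⟨P, hPN, hle⟩ := exists_covBy_map_le_of_isNilpotent hx hN hne
    obtain ⟨s, hbot, rfl⟩ := ih P hPN.lt ((map_mono hPN.le).trans hle)
    exact ⟨s.snoc N ⟨hPN, hle⟩, (s.head_snoc ..).trans hbot, s.last_snoc ..⟩

end Nilpotent

section Length

variable {R M : Type*} [Ring R] [AddCommGroup M] [Module R M] {x : Module.End R M}

lemma length_eq_length_add_one_of_covBy {P N : Submodule R M} (h : P ⋖ N) :
    Module.length R N = Module.length R P + 1 := by
  have : IsSimpleModule R (N ⧸ P.submoduleOf N) := (covBy_iff_quot_is_simple h.le).mp h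
  rw [← Module.length_eq_one R (N ⧸ P.submoduleOf N),
    ← (submoduleOfEquivOfLe h.le).length_eq]
  exact Module.length_eq_add_of_exact (P.submoduleOf N).subtype (P.submoduleOf N).mkQ
    (subtype_injective _) (mkQ_surjective _) (LinearMap.exact_subtype_mkQ _)

lemma length_relSeries_compatibleCovBy_apply {s : RelSeries (compatibleCovBy x)}
    (hbot : s.head = ⊥) (i : Fin (s.length + 1)) : Module.length R (s i) = (i : ℕ) := by
  induction i using Fin.induction with
  | zero =>
    rw [show s 0 = ⊥ from hbot, Module.length_bot, Fin.val_zero, Nat.cast_zero]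
  | succ i ih =>
    rw [length_eq_length_add_one_of_covBy (s.step i).1, ih, Fin.val_castSucc, Fin.val_succ,
      Nat.cast_succ]

theorem exists_compatible_complete_flag_general {d : ℕ} (hd : Module.length R M = d)
    (hx : IsNilpotent x) :
    ∃ B : Fin (d + 1) → Submodule R M,
      (Monotone B ∧ B 0 = ⊥ ∧ B (Fin.last d) = ⊤) ∧
      (∀ i, Module.length R (B i) = (i : ℕ)) ∧
      ∀ i : Fin d, (B i.succ).map x ≤ B i.castSucc := by
  obtain ⟨_, _⟩ : IsNoetherian R M ∧ IsArtinian R M :=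
    isFiniteLength_iff_isNoetherian_isArtinian.mp
      (Module.length_ne_top_iff.mp (hd ▸ ENat.natCast_ne_top d))
  obtain ⟨s, hbot, htop⟩ := exists_relSeries_compatibleCovBy hx (N := ⊤) le_top
  have hlen := length_relSeries_compatibleCovBy_apply hbot
  obtain rfl : s.length = d := by
    have hlast : Module.length R s.last = s.length := hlen (Fin.last _)
    rwa [htop, Module.length_top, hd, Nat.cast_inj, eq_comm] at hlast
  exact ⟨s, ⟨Fin.monotone_iff_le_succ.mpr fun i ↦ (s.step i).1.le, hbot, htop⟩, hlen,
    fun i ↦ (s.step i).2⟩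

end Length

/-- If `F` is an `x`-compatible `n`-step flag and `F″` is an `x`-compatible `m`-step
flag in `ℂ^d`, then there exists an `x`-compatible complete flag `B` in `ℂ^d`.
(Consequently the set-theoretic composition `ⁿW ∘̂ ᵐW` equals `ⁿZᵐ`.) -/
theorem exists_compatible_complete_flag {d n m : ℕ}
    (hd : 0 < d) (hn : 0 < n) (hm : 0 < m)
    (x : Module.End ℂ (Fin d → ℂ))
    (F : Fin (n + 1) → Submodule ℂ (Fin d → ℂ)) (hF : IsFlag F) (hxF : Compatible x F)
    (F'' : Fin (m + 1) → Submodule ℂ (Fin d → ℂ)) (hF'' : IsFlag F'')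
    (hxF'' : Compatible x F'') :
    ∃ B : Fin (d + 1) → Submodule ℂ (Fin d → ℂ), IsCompleteFlag B ∧ Compatible x B := by
  obtain ⟨B, hB, hlen, hBx⟩ := exists_compatible_complete_flag_general (d := d)
    (by simp [Module.length_eq_finrank]) (isNilpotent_of_map_succ_le_castSucc hF.2.1 hF.2.2 hxF)
  exact ⟨B, ⟨hB, fun i ↦ by simpa [Module.length_eq_finrank] using hlen i⟩, hBx⟩
end

section
/- Let d be a positive integer. For any two complete flags B, B′ in ℂ^d, the invariant matrix (a_{ij}) of the pair (B, B′) is a d×d permutation matrix; moreover the assignment (B, B′) ↦ (its permutation) induces a bijection between the set of orbits of the diagonal GL_d(ℂ)-action on pairs of complete flags and the symmetric group S_d. -/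
open Module Submodule

/-! In any pair of flags, row `i` of the invariant matrix sums to `dim F_i / F_{i-1}`, because the
entries are second differences of `dim (F_i ∩ F'_j)` and the sum telescopes. For complete flags all
row and column sums are therefore `1`, which forces a permutation matrix. If the permutation is
`σ`, then picking for each `i` a vector of `B_i ∩ B'_{σ i}` that witnesses the nonzero entry
`(i, σ i)` yields one basis `v` such that `B` is the flag of `v` and `B'` is the flag of `v ∘ σ⁻¹`.
So `σ` determines the pair up to the linear automorphism matching two such bases, and every
permutation occurs, starting from any basis. -/

section PermutationMatrix

variable {ι κ : Type*} [DecidableEq κ]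

theorem exists_eq_pi_single_of_sum_eq_one [Fintype κ] {a : κ → ℕ} (h : ∑ k, a k = 1) :
    ∃ k, a = Pi.single k 1 := by
  obtain ⟨k, hk⟩ := (Finsupp.sum_eq_one_iff (Finsupp.equivFunOnFinite.symm a)).1 <| by
    simpa [Finsupp.sum_fintype] using h
  exact ⟨k, by simpa [Finsupp.single_eq_pi_single] using congrArg DFunLike.coe hk⟩

theorem exists_equiv_of_sum_row_eq_one_of_sum_col_eq_one [Fintype ι] [Fintype κ]
    {A : ι → κ → ℕ} (hrow : ∀ i, ∑ j, A i j = 1) (hcol : ∀ j, ∑ i, A i j = 1) :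
    ∃ σ : ι ≃ κ, ∀ i j, A i j = if σ i = j then 1 else 0 := by
  classical
  choose f hf using fun i => exists_eq_pi_single_of_sum_eq_one (hrow i)
  choose g hg using fun j => exists_eq_pi_single_of_sum_eq_one (hcol j)
  have row (i j) : A i j = if f i = j then 1 else 0 := by
    simp only [hf, Pi.single_apply, eq_comm]
  have col (i j) : A i j = if g j = i then 1 else 0 := by
    simpa only [Pi.single_apply, eq_comm] using congrFun (hg j) i
  have inverse (i j) : f i = j ↔ g j = i := by
    have := (row i j).symm.trans (col i j)
    split_ifs at this <;> simp_all
  exact ⟨⟨f, g, fun i => (inverse _ _).1 rfl, fun j => (inverse _ _).2 rfl⟩, row⟩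

theorem equiv_eq_of_forall_entry_ne_zero {R : Type*} [Zero R] [One R] {A : ι → κ → R}
    {σ τ : ι ≃ κ} (hσ : ∀ i j, A i j = if σ i = j then 1 else 0) (hτ : ∀ i, A i (τ i) ≠ 0) :
    σ = τ :=
  Equiv.ext fun i => by_contra fun h => hτ i (by rw [hσ, if_neg h])

end PermutationMatrix

theorem sum_succ_sub_castSucc_s9 {A : Type*} [AddCommGroup A] {n : ℕ} (f : Fin (n + 1) → A) :
    ∑ j : Fin n, (f j.succ - f j.castSucc) = f (Fin.last n) - f 0 := by
  rw [Finset.sum_sub_distrib, sub_eq_sub_iff_add_eq_add, add_comm, ← Fin.sum_univ_succ f,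
    Fin.sum_univ_castSucc f, add_comm]

section Subquotient

theorem finrank_quotient_comap_subtype_map {R M N : Type*} [Ring R] [AddCommGroup M]
    [AddCommGroup N] [Module R M] [Module R N] (e : M ≃ₗ[R] N) (p q : Submodule R M) :
    finrank R (↥(p.map (e : M →ₗ[R] N)) ⧸
        (q.map (e : M →ₗ[R] N)).comap (p.map (e : M →ₗ[R] N)).subtype) =
      finrank R (↥p ⧸ q.comap p.subtype) := by
  refine (Quotient.equiv _ _ (e.submoduleMap p) ?_).finrank_eq.symm
  ext ⟨_, x, hx, rfl⟩
  simp

variable {K V : Type*} [DivisionRing K] [AddCommGroup V] [Module K V]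

theorem finrank_quotient_comap_subtype_add_finrank {p q : Submodule K V} [FiniteDimensional K p]
    (h : q ≤ p) : finrank K (↥p ⧸ q.comap p.subtype) + finrank K q = finrank K p := by
  rw [← (comapSubtypeEquivOfLe h).finrank_eq, finrank_quotient_add_finrank]

theorem covBy_of_le_of_finrank_eq_add_one {p q : Submodule K V} (hle : p ≤ q)
    (hrank : finrank K q = finrank K p + 1) : p ⋖ q := by
  have : FiniteDimensional K q := Module.finite_of_finrank_pos (by omega)
  refine ⟨hle.lt_of_ne fun h => by subst h; omega, fun r hpr hrq => ?_⟩
  have : FiniteDimensional K r := finiteDimensional_of_le hrq.le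
  have := finrank_lt_finrank_of_lt hpr
  have := finrank_lt_finrank_of_lt hrq
  omega

end Subquotient

section BasisFlag

theorem map_basis_flag {R M N : Type*} [Semiring R] [AddCommMonoid M] [AddCommMonoid N]
    [Module R M] [Module R N] {n : ℕ} (b : Basis (Fin n) R M) (e : M ≃ₗ[R] N) (k : Fin (n + 1)) :
    (b.flag k).map (e : M →ₗ[R] N) = (b.map e).flag k := by
  rw [Basis.flag, Basis.flag, map_span, Set.image_image]
  rfl

variable {K V : Type*} [DivisionRing K] [AddCommGroup V] [Module K V] {n : ℕ}

theorem finrank_basis_flag (b : Basis (Fin n) K V) (k : Fin (n + 1)) :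
    finrank K (b.flag k) = k := by
  have hset : {i : Fin n | i.castSucc < k} = Set.range (Fin.castLE k.is_le) := by
    rw [Fin.range_castLE]
    rfl
  have hindep := b.linearIndependent.comp _ (Fin.castLE_injective k.is_le)
  rw [Basis.flag, hset, ← Set.range_comp, finrank_span_eq_card hindep, Fintype.card_fin]

theorem exists_basis_flag_eq_of_covBy {F : Fin (n + 1) → Submodule K V} (hbot : F 0 = ⊥)
    (htop : F (Fin.last n) = ⊤) (hcov : ∀ i : Fin n, F i.castSucc ⋖ F i.succ) {v : Fin n → V}
    (hmem : ∀ i, v i ∈ F i.succ) (hnotMem : ∀ i, v i ∉ F i.castSucc) :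
    ∃ b : Basis (Fin n) K V, ⇑b = v ∧ b.flag = F := by
  have initial (k : Fin (n + 1)) : F k = span K (v '' {i | i.castSucc < k}) ∧
      LinearIndepOn K v {i | i.castSucc < k} := by
    induction k using Fin.induction with
    | zero => simp [hbot]
    | succ k ih =>
      obtain ⟨hspan, hindep⟩ := ih
      have hset : {i : Fin n | i.castSucc < k.succ} = insert k {i | i.castSucc < k.castSucc} := by
        ext i
        simp only [Set.mem_ofPred_eq, Fin.castSucc_lt_succ_iff, Fin.castSucc_lt_castSucc_iff,
          Set.mem_insert_iff, le_iff_eq_or_lt]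
      have hle : K ∙ v k ⊔ F k.castSucc ≤ F k.succ :=
        sup_le ((span_singleton_le_iff_mem _ _).2 (hmem k)) (hcov k).le
      have hlt : F k.castSucc < K ∙ v k ⊔ F k.castSucc :=
        right_lt_sup.2 fun h => hnotMem k ((span_singleton_le_iff_mem _ _).1 h)
      have hsucc : F k.succ = K ∙ v k ⊔ F k.castSucc :=
        (hle.eq_of_not_lt ((hcov k).2 hlt)).symm
      rw [hset, Set.image_insert_eq, span_insert, ← hspan]
      exact ⟨hsucc, hindep.insert (hspan ▸ hnotMem k)⟩
  obtain ⟨hspan, hindep⟩ := initial (Fin.last n)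
  simp only [Fin.castSucc_lt_last, Set.ofPred_true, Set.image_univ, linearIndepOn_univ_iff,
    htop] at hspan hindep
  refine ⟨Basis.mk hindep hspan.le, Basis.coe_mk _ _, funext fun k => ?_⟩
  rw [(initial k).1, Basis.flag, Basis.coe_mk]

end BasisFlag

section InvariantMatrix

variable {d n m : ℕ} {F G : Fin (n + 1) → Submodule ℂ (Fin d → ℂ)}
  {F' G' : Fin (m + 1) → Submodule ℂ (Fin d → ℂ)}

theorem invMatrix_comm (F : Fin (n + 1) → Submodule ℂ (Fin d → ℂ))
    (F' : Fin (m + 1) → Submodule ℂ (Fin d → ℂ)) (i : Fin n) (j : Fin m) :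
    invMatrix F F' i j = invMatrix F' F j i := by
  rw [invMatrix, invMatrix, inf_comm (F i.succ), inf_comm (F i.castSucc), inf_comm (F i.succ),
    sup_comm]

theorem invMatrix_eq_of_sameOrbit (h : SameOrbit (F, F') (G, G')) :
    invMatrix F F' = invMatrix G G' := by
  obtain ⟨g, hg, hg'⟩ := h
  obtain rfl : _ = G := funext hg
  obtain rfl : _ = G' := funext hg'
  ext i j
  have hinf (i j) : (F i).map (g : (Fin d → ℂ) →ₗ[ℂ] (Fin d → ℂ)) ⊓ (F' j).map _ =
      (F i ⊓ F' j).map _ := (Submodule.map_inf _ g.injective).symm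
  simp_rw [invMatrix]
  rw [hinf, hinf, hinf, ← Submodule.map_sup]
  exact (finrank_quotient_comap_subtype_map g _ _).symm

theorem invMatrix_ne_zero_iff {i : Fin n} {j : Fin m} :
    invMatrix F F' i j ≠ 0 ↔ ∃ x ∈ F i.succ ⊓ F' j.succ,
      x ∉ (F i.castSucc ⊓ F' j.succ) ⊔ (F i.succ ⊓ F' j.castSucc) := by
  rw [invMatrix, Ne, finrank_zero_iff, Submodule.Quotient.subsingleton_iff, comap_subtype_eq_top,
    SetLike.not_le_iff_exists]

theorem cast_invMatrix (hF : Monotone F) (hF' : Monotone F') (i : Fin n) (j : Fin m) :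
    (invMatrix F F' i j : ℤ) =
      (finrank ℂ ↥(F i.succ ⊓ F' j.succ) - finrank ℂ ↥(F i.castSucc ⊓ F' j.succ)) -
      (finrank ℂ ↥(F i.succ ⊓ F' j.castSucc) - finrank ℂ ↥(F i.castSucc ⊓ F' j.castSucc)) := by
  have hi : F i.castSucc ≤ F i.succ := hF (Fin.castSucc_le_succ i)
  have hj : F' j.castSucc ≤ F' j.succ := hF' (Fin.castSucc_le_succ j)
  have hquot : invMatrix F F' i j + _ = _ := finrank_quotient_comap_subtype_add_finrank
    (sup_le (inf_le_inf_right (F' j.succ) hi) (inf_le_inf_left (F i.succ) hj))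
  have hsup := finrank_sup_add_finrank_inf_eq (F i.castSucc ⊓ F' j.succ) (F i.succ ⊓ F' j.castSucc)
  have hinf : (F i.castSucc ⊓ F' j.succ) ⊓ (F i.succ ⊓ F' j.castSucc) =
      F i.castSucc ⊓ F' j.castSucc := by
    rw [inf_inf_inf_comm, inf_eq_left.2 hi, inf_eq_right.2 hj]
  rw [hinf] at hsup
  omega

theorem sum_invMatrix (hF : Monotone F) (hF' : IsFlag F') (i : Fin n) :
    ((∑ j, invMatrix F F' i j : ℕ) : ℤ) = finrank ℂ (F i.succ) - finrank ℂ (F i.castSucc) := by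
  obtain ⟨hmono, hbot, htop⟩ := hF'
  simp only [Nat.cast_sum, cast_invMatrix hF hmono]
  rw [sum_succ_sub_castSucc_s9
    fun j => (finrank ℂ ↥(F i.succ ⊓ F' j) : ℤ) - finrank ℂ ↥(F i.castSucc ⊓ F' j)]
  rw [htop, hbot, inf_top_eq, inf_top_eq, inf_bot_eq, inf_bot_eq, finrank_bot, Nat.cast_zero,
    sub_self, sub_zero]

end InvariantMatrix

section CompleteFlag

variable {d : ℕ} {B B' G G' : Fin (d + 1) → Submodule ℂ (Fin d → ℂ)}

theorem IsCompleteFlag.covBy (hB : IsCompleteFlag B) (i : Fin d) : B i.castSucc ⋖ B i.succ :=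
  covBy_of_le_of_finrank_eq_add_one (hB.1.1 (Fin.castSucc_le_succ i)) (by simp [hB.2])

theorem isCompleteFlag_basis_flag (b : Basis (Fin d) ℂ (Fin d → ℂ)) : IsCompleteFlag b.flag :=
  ⟨⟨b.flag_mono, b.flag_zero, b.flag_last⟩, finrank_basis_flag b⟩

theorem IsCompleteFlag.sum_invMatrix_eq_one (hB : IsCompleteFlag B) (hB' : IsCompleteFlag B')
    (i : Fin d) : ∑ j, invMatrix B B' i j = 1 := by
  have := sum_invMatrix hB.1.1 hB'.1 i
  rw [hB.2, hB.2, Fin.val_succ, Fin.val_castSucc] at this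
  omega

theorem IsCompleteFlag.exists_perm_invMatrix_eq (hB : IsCompleteFlag B)
    (hB' : IsCompleteFlag B') :
    ∃ σ : Equiv.Perm (Fin d), ∀ i j, invMatrix B B' i j = if σ i = j then 1 else 0 :=
  exists_equiv_of_sum_row_eq_one_of_sum_col_eq_one (hB.sum_invMatrix_eq_one hB') fun j => by
    simpa only [invMatrix_comm B B'] using hB'.sum_invMatrix_eq_one hB j

theorem IsCompleteFlag.exists_basis_flag_eq_and_reindex_flag_eq (hB : IsCompleteFlag B)
    (hB' : IsCompleteFlag B') {σ : Equiv.Perm (Fin d)} (hσ : ∀ i, invMatrix B B' i (σ i) ≠ 0) :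
    ∃ v : Basis (Fin d) ℂ (Fin d → ℂ), v.flag = B ∧ (v.reindex σ).flag = B' := by
  choose x hx hx' using fun i => invMatrix_ne_zero_iff.1 (hσ i)
  obtain ⟨v, hv, hvB⟩ := exists_basis_flag_eq_of_covBy hB.1.2.1 hB.1.2.2 hB.covBy
    (fun i => (hx i).1) fun i hi => hx' i (mem_sup_left ⟨hi, (hx i).2⟩)
  obtain ⟨v', hv', hvB'⟩ := exists_basis_flag_eq_of_covBy (v := x ∘ σ.symm)
    hB'.1.2.1 hB'.1.2.2 hB'.covBy
    (fun j => by simpa using (hx (σ.symm j)).2)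
    fun j hj => hx' (σ.symm j) (mem_sup_right ⟨(hx (σ.symm j)).1, by simpa using hj⟩)
  have hreindex : v.reindex σ = v' := DFunLike.coe_injective (by rw [Basis.coe_reindex, hv, hv'])
  exact ⟨v, hvB, hreindex ▸ hvB'⟩

theorem sameOrbit_basis_flag_reindex (v w : Basis (Fin d) ℂ (Fin d → ℂ))
    (σ : Equiv.Perm (Fin d)) :
    SameOrbit (v.flag, (v.reindex σ).flag) (w.flag, (w.reindex σ).flag) := by
  have hvw : v.map (v.equiv w (Equiv.refl _)) = w := by simp
  refine ⟨v.equiv w (Equiv.refl _), fun i => ?_, fun j => ?_⟩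
  · rw [map_basis_flag, hvw]
  · have hreindex : (v.reindex σ).map (v.equiv w (Equiv.refl _)) = w.reindex σ := by
      ext1; simp
    rw [map_basis_flag, hreindex]

theorem invMatrix_basis_flag_reindex_ne_zero (v : Basis (Fin d) ℂ (Fin d → ℂ))
    (σ : Equiv.Perm (Fin d)) (i : Fin d) :
    invMatrix v.flag (v.reindex σ).flag i (σ i) ≠ 0 := by
  refine invMatrix_ne_zero_iff.2 ⟨v i, ⟨by simp, ?_⟩, fun hmem => ?_⟩
  · simpa using ((v.reindex σ).self_mem_flag_iff (i := σ i)).2 (Fin.castSucc_lt_succ (i := σ i))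
  have hcoord : (v.reindex σ).coord (σ i) = v.coord i := by
    ext; simp
  have hle : (v.flag i.castSucc ⊓ (v.reindex σ).flag (σ i).succ) ⊔
      (v.flag i.succ ⊓ (v.reindex σ).flag (σ i).castSucc) ≤ LinearMap.ker (v.coord i) :=
    sup_le (inf_le_left.trans (v.flag_le_ker_coord le_rfl))
      (inf_le_right.trans (hcoord ▸ (v.reindex σ).flag_le_ker_coord le_rfl))
  simpa using hle hmem

theorem invMatrix_basis_flag_reindex (v : Basis (Fin d) ℂ (Fin d → ℂ)) (σ : Equiv.Perm (Fin d))
    (i j : Fin d) : invMatrix v.flag (v.reindex σ).flag i j = if σ i = j then 1 else 0 := by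
  obtain ⟨τ, hτ⟩ := (isCompleteFlag_basis_flag v).exists_perm_invMatrix_eq
    (isCompleteFlag_basis_flag (v.reindex σ))
  obtain rfl := equiv_eq_of_forall_entry_ne_zero hτ (invMatrix_basis_flag_reindex_ne_zero v σ)
  exact hτ i j

theorem IsCompleteFlag.sameOrbit_of_invMatrix_ne_zero (hB : IsCompleteFlag B)
    (hB' : IsCompleteFlag B') (hG : IsCompleteFlag G) (hG' : IsCompleteFlag G')
    {σ : Equiv.Perm (Fin d)} (hσ : ∀ i, invMatrix B B' i (σ i) ≠ 0)
    (hσ' : ∀ i, invMatrix G G' i (σ i) ≠ 0) : SameOrbit (B, B') (G, G') := by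
  obtain ⟨v, rfl, rfl⟩ := hB.exists_basis_flag_eq_and_reindex_flag_eq hB' hσ
  obtain ⟨w, rfl, rfl⟩ := hG.exists_basis_flag_eq_and_reindex_flag_eq hG' hσ'
  exact sameOrbit_basis_flag_reindex v w σ

end CompleteFlag

/-- For any two complete flags `B, B′` in `ℂ^d` the invariant matrix of `(B, B′)` is a
permutation matrix; the assignment `(B, B′) ↦ (its permutation)` induces a bijection
between the set of orbits of the diagonal `GL_d(ℂ)`-action on pairs of complete flags
and the symmetric group `S_d`: it is constant exactly on orbits and every permutation
arises. -/
theorem complete_flag_orbits_bijective_perm {d : ℕ} (hd : 0 < d) :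
    (∀ B B' : Fin (d + 1) → Submodule ℂ (Fin d → ℂ),
      IsCompleteFlag B → IsCompleteFlag B' →
      ∃ σ : Equiv.Perm (Fin d), ∀ i j : Fin d,
        invMatrix B B' i j = if σ i = j then 1 else 0) ∧
    (∀ B B' G G' : Fin (d + 1) → Submodule ℂ (Fin d → ℂ),
      IsCompleteFlag B → IsCompleteFlag B' → IsCompleteFlag G → IsCompleteFlag G' →
      ∀ σ τ : Equiv.Perm (Fin d),
        (∀ i j : Fin d, invMatrix B B' i j = if σ i = j then 1 else 0) →
        (∀ i j : Fin d, invMatrix G G' i j = if τ i = j then 1 else 0) →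
        (SameOrbit (B, B') (G, G') ↔ σ = τ)) ∧
    (∀ σ : Equiv.Perm (Fin d),
      ∃ B B' : Fin (d + 1) → Submodule ℂ (Fin d → ℂ),
        IsCompleteFlag B ∧ IsCompleteFlag B' ∧
        ∀ i j : Fin d, invMatrix B B' i j = if σ i = j then 1 else 0) := by
  refine ⟨fun B B' hB hB' => hB.exists_perm_invMatrix_eq hB', ?_, fun σ => ?_⟩
  · intro B B' G G' hB hB' hG hG' σ τ hσ hτ
    refine ⟨fun h => ?_, ?_⟩
    · rw [invMatrix_eq_of_sameOrbit h] at hσ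
      exact equiv_eq_of_forall_entry_ne_zero hσ fun i => by simp [hτ]
    · rintro rfl
      exact hB.sameOrbit_of_invMatrix_ne_zero hB' hG hG' (σ := σ)
        (fun i => by simp [hσ]) fun i => by simp [hτ]
  · let v := Pi.basisFun ℂ (Fin d)
    exact ⟨v.flag, (v.reindex σ).flag, isCompleteFlag_basis_flag v,
      isCompleteFlag_basis_flag (v.reindex σ), invMatrix_basis_flag_reindex v σ⟩
end

section
/- Let n and d be positive integers, V = ℂ^n and T = V^{⊗d} the d-th tensor power of V over ℂ. For g ∈ GL(V) let g^{⊗d} ∈ End_ℂ(T) be the induced operator on T, and for σ ∈ S_d let P_σ ∈ End_ℂ(T) be the operator permuting the tensor factors, P_σ(v_1 ⊗ ⋯ ⊗ v_d) = v_{σ^{−1}(1)} ⊗ ⋯ ⊗ v_{σ^{−1}(d)}. Then the centralizer in End_ℂ(T) of the set {g^{⊗d} : g ∈ GL(V)} equals the ℂ-linear span of {P_σ : σ ∈ S_d}. -/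
open PiTensorProduct

/-- The `d`-th tensor power `T = (ℂ^n)^{⊗d}` of `ℂ^n` over `ℂ`. -/
abbrev TensorPow (n d : ℕ) : Type :=
  PiTensorProduct ℂ (fun _ : Fin d => Fin n → ℂ)

/-- For `g ∈ GL(ℂ^n)`, the induced operator `g^{⊗d}` on the tensor power. -/
noncomputable def tensorPowMap (n d : ℕ) (g : (Fin n → ℂ) ≃ₗ[ℂ] (Fin n → ℂ)) :
    TensorPow n d →ₗ[ℂ] TensorPow n d :=
  PiTensorProduct.map fun _ : Fin d => (g : (Fin n → ℂ) →ₗ[ℂ] (Fin n → ℂ))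

/-- For `σ ∈ S_d`, the operator `P_σ` permuting the tensor factors:
`P_σ (v_1 ⊗ ⋯ ⊗ v_d) = v_{σ⁻¹(1)} ⊗ ⋯ ⊗ v_{σ⁻¹(d)}`. -/
noncomputable def permFactors (n d : ℕ) (σ : Equiv.Perm (Fin d)) :
    TensorPow n d →ₗ[ℂ] TensorPow n d :=
  (PiTensorProduct.reindex ℂ (fun _ : Fin d => Fin n → ℂ) σ).toLinearMap

/-!
The operators `P_σ` span the image of the group algebra of `S_d`, which is semisimple, so by the
density theorem this span is its own double centralizer. It remains to see that the centralizer of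
the `P_σ` is the span of the `g^{⊗d}`. An operator commuting with every `P_σ` is, up to the factor
`d!`, its own symmetrization. Operators `A_1 ⊗ ⋯ ⊗ A_d` span all of `End (V^{⊗d})`, and polarization
writes their symmetrizations as combinations of powers `B^{⊗d}`. Finally `(B + t)^{⊗d}` is
polynomial in `t`, and `B + t` is invertible for all but finitely many `t`, so `B^{⊗d}` lies in the
span of the `g^{⊗d}`.
-/

section Multilinear

open Finset

variable {R ι M N : Type*} [CommSemiring R] [AddCommMonoid M] [Module R M]

/-- The polarization identity: expanding the right-hand side over all `r : ι → ι`,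
inclusion-exclusion leaves only the surjective ones. -/
theorem sum_map_comp_perm_eq_alternating_sum [Fintype ι] [DecidableEq ι] [AddCommGroup N]
    [Module R N] (f : MultilinearMap R (fun _ : ι => M) N) (x : ι → M) :
    ∑ σ : Equiv.Perm ι, f (x ∘ σ) =
      ∑ s : Finset ι, (-1 : ℤ) ^ #s • f fun _ => ∑ i ∈ sᶜ, x i := by
  let missing (i : ι) : Finset (ι → ι) := Fintype.piFinset fun _ => {i}ᶜ
  have mem_inf (s : Finset ι) (r : ι → ι) :
      r ∈ s.inf missing ↔ r ∈ Fintype.piFinset fun _ => sᶜ := by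
    simp only [missing, Finset.mem_inf, Fintype.mem_piFinset, mem_compl, mem_singleton]
    grind
  have mem_inf_compl (r : ι → ι) :
      r ∈ univ.inf (fun i => (missing i)ᶜ) ↔ Function.Surjective r := by
    simp [missing, Finset.mem_inf, Function.Surjective]
  calc ∑ σ : Equiv.Perm ι, f (x ∘ σ)
      = ∑ r ∈ univ.inf fun i => (missing i)ᶜ, f (x ∘ r) := by
        refine sum_of_injOn (⇑) DFunLike.coe_injective.injOn
          (fun σ _ => (mem_inf_compl σ).2 σ.surjective) (fun r hr hr' => ?_) fun _ _ => rfl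
        have r_bijective := ((mem_inf_compl r).1 hr).bijective_of_finite
        exact (hr' ⟨Equiv.ofBijective r r_bijective, mem_univ _, rfl⟩).elim
    _ = ∑ s : Finset ι, (-1 : ℤ) ^ #s • ∑ r ∈ s.inf missing, f (x ∘ r) := by
        rw [inclusion_exclusion_sum_inf_compl, powerset_univ]
    _ = ∑ s : Finset ι, (-1 : ℤ) ^ #s • f fun _ => ∑ i ∈ sᶜ, x i := by
        refine sum_congr rfl fun s _ => ?_
        rw [f.map_sum_finset, Finset.ext (mem_inf s)]
        rfl

theorem exists_polynomial_eval_eq_map_add_smul [Finite ι]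
    (f : MultilinearMap R (fun _ : ι => M) R) (x y : M) :
    ∃ p : Polynomial R, ∀ t : R, p.eval t = f fun _ => x + t • y := by
  classical
  have := Fintype.ofFinite ι
  refine ⟨∑ s : Finset ι,
    Polynomial.C (f (s.piecewise (fun _ => y) fun _ => x)) * Polynomial.X ^ #s, fun t => ?_⟩
  have map_piecewise (s : Finset ι) : f (s.piecewise (fun _ => t • y) fun _ => x) =
      f (s.piecewise (fun _ => y) fun _ => x) * t ^ #s := by
    have h := f.map_piecewise_smul (fun _ => t) (s.piecewise (fun _ => y) fun _ => x) s
    rw [prod_const, smul_eq_mul, mul_comm] at h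
    rw [← h]
    congr 1
    ext i
    by_cases hi : i ∈ s <;> simp [hi]
  calc _ = ∑ s : Finset ι, f (s.piecewise (fun _ => y) fun _ => x) * t ^ #s := by
        simp [Polynomial.eval_finsetSum]
    _ = f ((fun _ => t • y) + fun _ => x) := by
        rw [f.map_add_univ]
        exact sum_congr rfl fun s _ => (map_piecewise s).symm
    _ = f fun _ => x + t • y := congrArg f (funext fun _ => add_comm _ _)

end Multilinear

section ZariskiDensity

variable {K ι M N V : Type*} [Field K] [Finite ι] [AddCommGroup M] [Module K M]
  [AddCommGroup N] [Module K N] [AddCommGroup V] [Module K V]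

theorem map_const_mem_of_infinite_setOf_map_add_smul_mem
    (f : MultilinearMap K (fun _ : ι => M) N) {W : Submodule K N} {x y : M}
    (h : {t : K | f (fun _ => x + t • y) ∈ W}.Infinite) : f (fun _ => x) ∈ W := by
  by_contra hx
  obtain ⟨φ, hφx, hφW⟩ := Submodule.exists_le_ker_of_notMem hx
  obtain ⟨p, hp⟩ := exists_polynomial_eval_eq_map_add_smul (φ.compMultilinearMap f) x y
  have p_eq_zero : p = 0 := p.eq_zero_of_infinite_isRoot <|
    h.mono fun t ht => (hp t).trans (hφW ht)
  apply hφx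
  simpa [p_eq_zero] using (hp 0).symm

theorem infinite_setOf_isUnit_add_smul_one [Infinite K] [FiniteDimensional K V]
    (A : Module.End K V) : {t : K | IsUnit (A + t • 1)}.Infinite := by
  refine (Module.End.finite_spectrum (-A)).infinite_compl.mono fun t ht => ?_
  simpa [Algebra.algebraMap_eq_smul_one, add_comm] using spectrum.notMem_iff.1 ht

theorem span_range_map_const_eq_span_range_linearEquiv [Infinite K] [FiniteDimensional K V]
    (f : MultilinearMap K (fun _ : ι => Module.End K V) N) :
    Submodule.span K (Set.range fun A : Module.End K V => f fun _ => A) =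
      Submodule.span K (Set.range fun g : V ≃ₗ[K] V => f fun _ => (g : V →ₗ[K] V)) := by
  refine (Submodule.span_le.2 ?_).antisymm (Submodule.span_mono ?_)
  · rintro _ ⟨A, rfl⟩
    refine map_const_mem_of_infinite_setOf_map_add_smul_mem (y := 1) f
      ((infinite_setOf_isUnit_add_smul_one A).mono ?_)
    rintro t ⟨u, hu⟩
    refine Submodule.subset_span ⟨LinearMap.GeneralLinearGroup.generalLinearEquiv K V u, ?_⟩
    simp [← hu]
  · rintro _ ⟨g, rfl⟩
    exact ⟨g, rfl⟩

end ZariskiDensity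

section Centralizer

theorem span_subset_centralizer {R A : Type*} [CommSemiring R] [Semiring A] [Algebra R A]
    {s t : Set A} (h : s ⊆ t.centralizer) : (Submodule.span R s : Set A) ⊆ t.centralizer :=
  Submodule.span_le (p := Subalgebra.toSubmodule (Subalgebra.centralizer R t)).2 h

theorem centralizer_span (R : Type*) {A : Type*} [CommSemiring R] [Semiring A] [Algebra R A]
    (s : Set A) : (Submodule.span R s : Set A).centralizer = s.centralizer :=
  (Set.centralizer_subset Submodule.subset_span).antisymm <|
    Set.subset_centralizer_centralizer.trans <| Set.centralizer_subset <|
      span_subset_centralizer Set.subset_centralizer_centralizer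

open Representation

theorem asAlgebraHom_mem_span_range {k G V : Type*} [CommSemiring k] [Monoid G] [AddCommMonoid V]
    [Module k V] (ρ : Representation k G V) (r : MonoidAlgebra k G) :
    ρ.asAlgebraHom r ∈ Submodule.span k (Set.range ρ) := by
  rw [asAlgebraHom_def, MonoidAlgebra.lift_apply]
  exact Submodule.sum_mem _ fun g _ => Submodule.smul_mem _ _ (Submodule.subset_span ⟨g, rfl⟩)

theorem centralizer_centralizer_range_eq_span {k G V : Type*} [Field k] [Monoid G] [AddCommGroup V]
    [Module k V] [FiniteDimensional k V] (ρ : Representation k G V) [ρ.IsSemisimpleRepresentation] :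
    (Set.range ρ).centralizer.centralizer = Submodule.span k (Set.range ρ) := by
  refine Set.Subset.antisymm (fun f hf => ?_)
    (span_subset_centralizer Set.subset_centralizer_centralizer)
  have : IsSemisimpleModule (MonoidAlgebra k G) ρ.asModule :=
    (isSemisimpleRepresentation_iff_isSemisimpleModule_asModule ρ).1 inferInstance
  let F : Module.End (Module.End (MonoidAlgebra k G) ρ.asModule) ρ.asModule :=
    { toFun := f
      map_add' := f.map_add
      map_smul' := fun u x => by
        let u' := (IntertwiningMap.equivAlgEnd ρ).symm u
        have u_mem : u'.toLinearMap ∈ (Set.range ρ).centralizer := by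
          rintro _ ⟨g, rfl⟩
          exact (u'.isIntertwining' g).symm
        exact (LinearMap.congr_fun (hf _ u_mem) x).symm }
  obtain ⟨s, hs⟩ := Module.Finite.fg_top (R := k) (M := V)
  obtain ⟨r, hr⟩ := jacobson_density F s
  have f_eq : f = ρ.asAlgebraHom r := LinearMap.ext_on hs hr
  exact f_eq ▸ asAlgebraHom_mem_span_range ρ r

end Centralizer

section TensorPower

open scoped TensorProduct Nat

theorem span_range_piTensorProduct_map_eq_top {R ι : Type*} {M N : ι → Type*}
    [CommSemiring R] [Finite ι] [∀ i, AddCommMonoid (M i)] [∀ i, Module R (M i)]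
    [∀ i, Module.Free R (M i)] [∀ i, Module.Finite R (M i)] [∀ i, AddCommMonoid (N i)]
    [∀ i, Module R (N i)] [∀ i, Module.Free R (N i)] [∀ i, Module.Finite R (N i)] :
    Submodule.span R (Set.range fun A : (i : ι) → M i →ₗ[R] N i => map A) = ⊤ := by
  classical
  have := Fintype.ofFinite ι
  let bM (i : ι) := Module.Free.chooseBasis R (M i)
  let bN (i : ι) := Module.Free.chooseBasis R (N i)
  let b := (Basis.piTensorProduct bM).linearMap (Basis.piTensorProduct bN)
  have elementary_eq_map (p : (i : ι) → Module.Free.ChooseBasisIndex R (N i))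
      (q : (i : ι) → Module.Free.ChooseBasisIndex R (M i)) :
      b (p, q) = map fun i => (bM i).linearMap (bN i) (p i, q i) := by
    refine (Basis.piTensorProduct bM).ext fun r => ?_
    rw [Module.Basis.linearMap_apply_apply]
    simp only [Basis.piTensorProduct_apply, map_tprod, Module.Basis.linearMap_apply_apply]
    split_ifs with hqr
    · simp [hqr]
    · obtain ⟨i, hi⟩ := Function.ne_iff.1 hqr
      exact (MultilinearMap.map_coord_zero _ i (if_neg hi)).symm
  rw [eq_top_iff, ← b.span_eq, Submodule.span_le]
  rintro _ ⟨⟨p, q⟩, rfl⟩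
  exact Submodule.subset_span ⟨_, (elementary_eq_map p q).symm⟩

/-- The representation of `S_ι` on `M^{⊗ι}` that permutes the tensor factors: `σ` moves the factor
at position `i` to position `σ i`. -/
noncomputable def tensorPermRep (R ι M : Type*) [CommSemiring R] [AddCommMonoid M] [Module R M] :
    Representation R (Equiv.Perm ι) (⨂[R] _ : ι, M) where
  toFun σ := (reindex R (fun _ => M) σ).toLinearMap
  map_one' := congrArg LinearEquiv.toLinearMap (reindex_refl (R := R) (s := fun _ : ι => M))
  map_mul' σ τ := congrArg LinearEquiv.toLinearMap
    (reindex_trans (R := R) (s := fun _ : ι => M) τ σ).symm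

section Symmetrization

variable {R ι M : Type*}

theorem tensorPermRep_mul_map [CommSemiring R] [AddCommMonoid M] [Module R M]
    (σ : Equiv.Perm ι) (A : ι → Module.End R M) :
    tensorPermRep R ι M σ * map A = map (A ∘ ⇑σ⁻¹) * tensorPermRep R ι M σ :=
  (map_comp_reindex_eq (t := fun _ => M) A σ).symm

variable [CommRing R] [AddCommGroup M] [Module R M]

theorem linHom_tensorPermRep_map (σ : Equiv.Perm ι) (A : ι → Module.End R M) :
    (tensorPermRep R ι M).linHom (tensorPermRep R ι M) σ (map A) = map (A ∘ ⇑σ⁻¹) := by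
  calc tensorPermRep R ι M σ * (map A * tensorPermRep R ι M σ⁻¹)
      = map (A ∘ ⇑σ⁻¹) * (tensorPermRep R ι M σ * tensorPermRep R ι M σ⁻¹) := by
        rw [← mul_assoc, tensorPermRep_mul_map, mul_assoc]
    _ = map (A ∘ ⇑σ⁻¹) := by
        rw [← map_mul, mul_inv_cancel, map_one, mul_one]

variable [Fintype ι] [Module.Free R M] [Module.Finite R M]

theorem sum_linHom_tensorPermRep_mem_span_map_const [DecidableEq ι]
    (X : Module.End R (⨂[R] _ : ι, M)) :
    ∑ σ, (tensorPermRep R ι M).linHom (tensorPermRep R ι M) σ X ∈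
      Submodule.span R (Set.range fun B : Module.End R M => map fun _ : ι => B) := by
  set S := Submodule.span R (Set.range fun B : Module.End R M => map fun _ : ι => B)
  let symmetrize := ∑ σ, (tensorPermRep R ι M).linHom (tensorPermRep R ι M) σ
  have symmetrize_map_mem (A : ι → Module.End R M) : symmetrize (map A) ∈ S := by
    have h : symmetrize (map A) = ∑ σ : Equiv.Perm ι, mapMultilinear R _ _ (A ∘ σ) := by
      rw [LinearMap.sum_apply]
      exact Fintype.sum_equiv (Equiv.inv _) _ _ fun σ => linHom_tensorPermRep_map σ A
    rw [h, sum_map_comp_perm_eq_alternating_sum]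
    exact S.sum_mem fun s _ =>
      S.smul_of_tower_mem _ (Submodule.subset_span ⟨∑ i ∈ sᶜ, A i, rfl⟩)
  have top_le : ⊤ ≤ S.comap symmetrize := by
    rw [← span_range_piTensorProduct_map_eq_top, Submodule.span_le]
    rintro _ ⟨A, rfl⟩
    exact symmetrize_map_mem A
  simpa [symmetrize] using top_le (Submodule.mem_top (x := X))

theorem centralizer_range_tensorPermRep_eq_span_map_const
    (h : IsUnit ((Fintype.card ι)! : R)) :
    (Set.range (tensorPermRep R ι M)).centralizer =
      Submodule.span R (Set.range fun B : Module.End R M => map fun _ : ι => B) := by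
  classical
  refine Set.Subset.antisymm (fun X hX => ?_) (span_subset_centralizer ?_)
  · have X_fixed (σ : Equiv.Perm ι) :
        (tensorPermRep R ι M).linHom (tensorPermRep R ι M) σ X = X := by
      have hσ : tensorPermRep R ι M σ⁻¹ * X = X * tensorPermRep R ι M σ⁻¹ := hX _ ⟨σ⁻¹, rfl⟩
      calc tensorPermRep R ι M σ * (X * tensorPermRep R ι M σ⁻¹)
          = tensorPermRep R ι M σ * tensorPermRep R ι M σ⁻¹ * X := by rw [← hσ, mul_assoc]
        _ = X := by rw [← map_mul, mul_inv_cancel, map_one, one_mul]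
    have factorial_smul_mem := sum_linHom_tensorPermRep_mem_span_map_const X
    simp only [X_fixed, Finset.sum_const, Finset.card_univ, Fintype.card_perm,
      ← Nat.cast_smul_eq_nsmul R] at factorial_smul_mem
    exact (Submodule.smul_mem_iff_of_isUnit _ h).1 factorial_smul_mem
  · rintro _ ⟨B, rfl⟩ _ ⟨σ, rfl⟩
    exact tensorPermRep_mul_map σ fun _ => B

end Symmetrization

section SchurWeyl

variable {K ι V : Type*} [Field K] [Infinite K] [Fintype ι] [AddCommGroup V] [Module K V]
  [FiniteDimensional K V]

theorem centralizer_range_tensorPermRep_eq_span_map_linearEquiv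
    (h : ((Fintype.card ι)! : K) ≠ 0) :
    (Set.range (tensorPermRep K ι V)).centralizer =
      Submodule.span K (Set.range fun g : V ≃ₗ[K] V => map fun _ : ι => (g : V →ₗ[K] V)) := by
  rw [centralizer_range_tensorPermRep_eq_span_map_const h.isUnit]
  exact congrArg _ <| span_range_map_const_eq_span_range_linearEquiv <|
    mapMultilinear K (fun _ : ι => V) fun _ => V

theorem centralizer_tensorPow_eq_span_perm_general (h : ((Fintype.card ι)! : K) ≠ 0) :
    (Set.range fun g : V ≃ₗ[K] V => map fun _ : ι => (g : V →ₗ[K] V)).centralizer =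
      Submodule.span K (Set.range (tensorPermRep K ι V)) := by
  have : NeZero (Nat.card (Equiv.Perm ι) : K) :=
    ⟨by rwa [Nat.card_perm, Nat.card_eq_fintype_card]⟩
  rw [← centralizer_span K, ← centralizer_range_tensorPermRep_eq_span_map_linearEquiv h,
    centralizer_centralizer_range_eq_span]

end SchurWeyl

end TensorPower

/-- Schur duality, first half: the centralizer in `End_ℂ((ℂ^n)^{⊗d})` of the operators
`g^{⊗d}`, `g ∈ GL(ℂ^n)`, is exactly the `ℂ`-linear span of the permutation operators
`P_σ`, `σ ∈ S_d`. -/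
theorem centralizer_tensorPow_eq_span_perm {n d : ℕ} (hn : 0 < n) (hd : 0 < d) :
    {f : TensorPow n d →ₗ[ℂ] TensorPow n d |
        ∀ g : (Fin n → ℂ) ≃ₗ[ℂ] (Fin n → ℂ),
          f ∘ₗ tensorPowMap n d g = tensorPowMap n d g ∘ₗ f} =
      ↑(Submodule.span ℂ (Set.range (permFactors n d))) := by
  refine .trans ?_ <| centralizer_tensorPow_eq_span_perm_general (ι := Fin d) (V := Fin n → ℂ)
    (Nat.cast_ne_zero.2 (Nat.factorial_ne_zero _))
  ext f
  simp only [Set.mem_centralizer_iff, Set.forall_mem_range]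
  exact forall_congr' fun g => eq_comm
end

section
/- Let n and d be positive integers, V = ℂ^n and T = V^{⊗d} the d-th tensor power of V over ℂ. For g ∈ GL(V) let g^{⊗d} ∈ End_ℂ(T) be the induced operator on T, and for σ ∈ S_d let P_σ ∈ End_ℂ(T) be the operator permuting the tensor factors, P_σ(v_1 ⊗ ⋯ ⊗ v_d) = v_{σ^{−1}(1)} ⊗ ⋯ ⊗ v_{σ^{−1}(d)}. Then the centralizer in End_ℂ(T) of the set {P_σ : σ ∈ S_d} equals the ℂ-linear span of {g^{⊗d} : g ∈ GL(V)}. -/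
open PiTensorProduct

/-!
Expanding `(∑ j, t j • e j)^{⊗ι}` for a basis `e` of `End V` gives a polynomial in `t` whose
coefficients are the sums of the tensors `⨂ i, e (a i)` over the orbits of the symmetric group on
the words `a`. The operators commuting with all permutations of the factors are the combinations of
these orbit sums. Over an infinite field, a linear functional that kills the values of this
polynomial wherever the determinant is nonzero kills every coefficient, because multiplying it by
the determinant gives the zero polynomial. So every orbit sum is in the span of the `g^{⊗ι}`.
-/

open Module Matrix
open scoped TensorProduct

section WordContent

variable {ι J : Type*} [Fintype ι]

/-- The content of a word `a`: how often each letter occurs in it. It is encoded as an exponent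
vector, that of the monomial `∏ i, X (a i)`, and determines `a` up to permutation. -/
noncomputable def wordContent (a : ι → J) : J →₀ ℕ :=
  ∑ i, Finsupp.single (a i) 1

theorem wordContent_apply (a : ι → J) (j : J) : wordContent a j = Nat.card {i // a i = j} := by
  classical
  simp [wordContent, Finsupp.single_apply, Fintype.card_subtype]

theorem exists_perm_comp_eq_of_wordContent_eq {a b : ι → J} (h : wordContent a = wordContent b) :
    ∃ σ : Equiv.Perm ι, b ∘ σ = a := by
  have fiberEquiv (j : J) : Nonempty ({i // a i = j} ≃ {i // b i = j}) :=
    Finite.card_eq.mp (by rw [← wordContent_apply, ← wordContent_apply, h])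
  exact ⟨Equiv.ofFiberEquiv fun j => (fiberEquiv j).some, funext (Equiv.ofFiberEquiv_map _)⟩

theorem eval_monomial_wordContent {R : Type*} [CommSemiring R] (a : ι → J) (t : J → R) (r : R) :
    MvPolynomial.eval t (MvPolynomial.monomial (wordContent a) r) = r * ∏ i, t (a i) := by
  rw [← mul_one r, ← smul_eq_mul, ← MvPolynomial.smul_monomial, wordContent,
    MvPolynomial.monomial_sum_one]
  simp [MvPolynomial.smul_eval, MvPolynomial.eval_monomial]

end WordContent

section Coefficients

variable {K N ι J : Type*} [Field K] [Infinite K] [AddCommGroup N] [Module K N] [Fintype ι]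
  [DecidableEq ι] [Fintype J]

theorem sum_filter_wordContent_mem [DecidableEq J] {U : Submodule K N}
    {Q : MvPolynomial J K} (hQ : Q ≠ 0) (x : (ι → J) → N)
    (hU : ∀ t, MvPolynomial.eval t Q ≠ 0 → ∑ a, (∏ i, t (a i)) • x a ∈ U) (s : J →₀ ℕ) :
    ∑ a with wordContent a = s, x a ∈ U := by
  by_contra hs
  obtain ⟨φ, hφs, hφU⟩ := Submodule.exists_le_ker_of_notMem hs
  let P : MvPolynomial J K := ∑ a, MvPolynomial.monomial (wordContent a) (φ (x a))
  have eval_P (t : J → K) : P.eval t = φ (∑ a, (∏ i, t (a i)) • x a) := by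
    simp only [P, map_sum, eval_monomial_wordContent, map_smul, smul_eq_mul, mul_comm]
  have P_mul_Q : P * Q = 0 := MvPolynomial.funext fun t => by
    rw [map_mul, map_zero, mul_eq_zero, or_iff_not_imp_right, eval_P]
    exact fun ht => hφU (hU t ht)
  have P_eq_zero : P = 0 := (mul_eq_zero.mp P_mul_Q).resolve_right hQ
  apply hφs
  calc φ (∑ a with wordContent a = s, x a) = P.coeff s := by
        simp only [P, map_sum, MvPolynomial.coeff_sum, MvPolynomial.coeff_monomial,
          Finset.sum_filter, apply_ite φ, map_zero]
    _ = 0 := by rw [P_eq_zero, MvPolynomial.coeff_zero]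

theorem sum_smul_mem_of_forall_diagonal_mem {W : Type*} [AddCommMonoid W] [Module K W]
    (m : MultilinearMap K (fun _ : ι => W) N) (e : J → W) {U : Submodule K N}
    {Q : MvPolynomial J K} (hQ : Q ≠ 0)
    (hU : ∀ t, MvPolynomial.eval t Q ≠ 0 → m (fun _ => ∑ j, t j • e j) ∈ U)
    {c : (ι → J) → K} (hc : ∀ (σ : Equiv.Perm ι) a, c (a ∘ σ) = c a) :
    ∑ a, c a • m (fun i => e (a i)) ∈ U := by
  classical
  have orbitSum_mem (s : J →₀ ℕ) : ∑ a with wordContent a = s, m (fun i => e (a i)) ∈ U := by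
    refine sum_filter_wordContent_mem hQ _ (fun t ht => ?_) s
    simpa only [MultilinearMap.map_sum, MultilinearMap.map_smul_univ] using hU t ht
  rw [← Finset.sum_fiberwise_of_maps_to fun a _ =>
    Finset.mem_image_of_mem wordContent (Finset.mem_univ a)]
  refine Submodule.sum_mem U fun s hs => ?_
  obtain ⟨b, -, rfl⟩ := Finset.mem_image.mp hs
  have c_eq (a : ι → J) (ha : wordContent a = wordContent b) : c a = c b := by
    obtain ⟨σ, rfl⟩ := exists_perm_comp_eq_of_wordContent_eq ha
    exact hc σ b
  have smul_orbitSum : ∑ a with wordContent a = wordContent b, c a • m (fun i => e (a i)) =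
      c b • ∑ a with wordContent a = wordContent b, m (fun i => e (a i)) := by
    rw [Finset.smul_sum]
    exact Finset.sum_congr rfl fun a ha => by rw [c_eq a (Finset.mem_filter.mp ha).2]
  exact smul_orbitSum ▸ U.smul_mem _ (orbitSum_mem _)

end Coefficients

section Conjugation

variable {R M ι : Type*} [CommSemiring R] [AddCommMonoid M] [Module R M]

theorem conj_reindex_map {ι' : Type*} (e : ι ≃ ι') (A : ι → End R M) :
    (reindex R (fun _ => M) e).conj (PiTensorProduct.map A) =
      PiTensorProduct.map fun i => A (e.symm i) := by
  rw [LinearEquiv.conj_apply, ← map_comp_reindex_eq, LinearMap.comp_assoc, LinearEquiv.comp_symm,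
    LinearMap.comp_id]

theorem conj_reindex_eq_self_iff {f : End R (⨂[R] _ : ι, M)} {σ : Equiv.Perm ι} :
    (reindex R (fun _ => M) σ).conj f = f ↔
      f ∘ₗ (reindex R (fun _ => M) σ).toLinearMap =
        (reindex R (fun _ => M) σ).toLinearMap ∘ₗ f := by
  rw [LinearEquiv.conj_apply, LinearEquiv.comp_toLinearMap_symm_eq, eq_comm]

end Conjugation

section TensorPowerEnd

variable {R M ι κ : Type*} [CommSemiring R] [AddCommMonoid M] [Module R M] [Fintype ι]
  [DecidableEq ι] [Fintype κ] [DecidableEq κ] (b : Basis κ R M)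

/-- The basis of `End (M^{⊗ι})` formed by the tensor products of matrix units of `M`, on which
permutations of the factors act by permuting words. It is encoded as the basis of matrix units of
`M^{⊗ι}`, with a pair of words in `κ` read as a word in pairs. -/
noncomputable def piTensorEndBasis : Basis (ι → κ × κ) R (End R (⨂[R] _ : ι, M)) :=
  (Basis.piTensorProduct fun _ : ι => b).end.reindex (Equiv.arrowProdEquivProdArrow ι _ _).symm

theorem piTensorEndBasis_apply (a : ι → κ × κ) :
    piTensorEndBasis b a = PiTensorProduct.map fun i => b.end (a i) := by
  refine (Basis.piTensorProduct fun _ : ι => b).ext fun q => ?_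
  have unit_apply : piTensorEndBasis b a (Basis.piTensorProduct (fun _ => b) q) =
      if (fun i => (a i).2) = q then Basis.piTensorProduct (fun _ => b) (fun i => (a i).1)
        else 0 := by
    rw [piTensorEndBasis, Basis.reindex_apply]
    exact Basis.end_apply_apply (Basis.piTensorProduct fun _ => b) _ q
  rw [unit_apply, Basis.piTensorProduct_apply, Basis.piTensorProduct_apply,
    PiTensorProduct.map_tprod]
  simp only [Basis.end_apply_apply]
  split_ifs with h
  · simp only [congrFun h, if_true]
  · obtain ⟨i, hi⟩ := Function.ne_iff.mp h
    exact (MultilinearMap.map_coord_zero _ i (if_neg hi)).symm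

theorem piTensorEndBasis_repr_conj_reindex (f : End R (⨂[R] _ : ι, M)) (σ : Equiv.Perm ι)
    (a : ι → κ × κ) :
    (piTensorEndBasis b).repr ((reindex R (fun _ => M) σ).conj f) a =
      (piTensorEndBasis b).repr f (a ∘ σ) := by
  suffices h : (piTensorEndBasis b).coord a ∘ₗ (reindex R (fun _ => M) σ).conj.toLinearMap =
      (piTensorEndBasis b).coord (a ∘ σ) from LinearMap.congr_fun h f
  refine (piTensorEndBasis b).ext fun c => ?_
  have conj_basis : (reindex R (fun _ => M) σ).conj (piTensorEndBasis b c) =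
      piTensorEndBasis b (c ∘ σ.symm) := by
    rw [piTensorEndBasis_apply, conj_reindex_map, piTensorEndBasis_apply]
    rfl
  simp only [LinearMap.comp_apply, LinearEquiv.coe_coe, conj_basis, Basis.coord_apply,
    Basis.repr_self, Finsupp.single_apply, Equiv.comp_symm_eq]

end TensorPowerEnd

theorem sum_smul_end_eq_toLin {R M κ : Type*} [CommSemiring R] [AddCommMonoid M] [Module R M]
    [Fintype κ] [DecidableEq κ] (b : Basis κ R M) (t : κ × κ → R) :
    ∑ p, t p • b.end p = toLin b b (of fun i j => t (i, j)) := by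
  simp only [Basis.end_apply, ← map_smul, ← map_sum]
  congr 1
  exact (Matrix.stdBasis R κ κ).sum_equivFun (of fun i j => t (i, j))

theorem map_sum_smul_end_mem_span {R M ι κ : Type*} [CommRing R] [AddCommGroup M] [Module R M]
    [Fintype κ] [DecidableEq κ] (b : Basis κ R M) {t : κ × κ → R}
    (ht : IsUnit (of fun i j => t (i, j)).det) :
    PiTensorProduct.map (fun _ : ι => ∑ p, t p • b.end p) ∈
      Submodule.span R (Set.range fun g : M ≃ₗ[R] M =>
        PiTensorProduct.map fun _ : ι => (g : M →ₗ[R] M)) := by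
  rw [sum_smul_end_eq_toLin]
  exact Submodule.subset_span ⟨toLinearEquiv b _ ht, rfl⟩

theorem centralizer_perm_eq_span_tensorPow_general {K V ι : Type*} [Field K] [Infinite K]
    [AddCommGroup V] [Module K V] [FiniteDimensional K V] [Finite ι] :
    {f : End K (⨂[K] _ : ι, V) | ∀ σ : Equiv.Perm ι,
        f ∘ₗ (reindex K (fun _ => V) σ).toLinearMap =
          (reindex K (fun _ => V) σ).toLinearMap ∘ₗ f} =
      ↑(Submodule.span K (Set.range fun g : V ≃ₗ[K] V =>
        PiTensorProduct.map fun _ : ι => (g : V →ₗ[K] V))) := by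
  classical
  have := Fintype.ofFinite ι
  simp only [← conj_reindex_eq_self_iff]
  refine Set.Subset.antisymm (fun f hf => ?_) fun f hf σ => ?_
  · let b := finBasis K V
    have repr_comp_perm (σ : Equiv.Perm ι) (a) :
        (piTensorEndBasis b).repr f (a ∘ σ) = (piTensorEndBasis b).repr f a := by
      rw [← piTensorEndBasis_repr_conj_reindex, hf σ]
    rw [← (piTensorEndBasis b).sum_repr f]
    simp only [piTensorEndBasis_apply]
    refine sum_smul_mem_of_forall_diagonal_mem
      (PiTensorProduct.mapMultilinear K (fun _ : ι => V) fun _ => V) b.end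
      (det_mvPolynomialX_ne_zero _ K) (fun t ht => map_sum_smul_end_mem_span b ?_) repr_comp_perm
    exact eval_det_mvPolynomialX _ K t ▸ ht.isUnit
  · refine LinearMap.eqOn_span (f := (reindex K (fun _ => V) σ).conj.toLinearMap)
      (g := LinearMap.id) ?_ hf
    rintro _ ⟨g, rfl⟩
    exact conj_reindex_map σ fun _ => (g : V →ₗ[K] V)

/-- Schur duality, second half: the centralizer in `End_ℂ((ℂ^n)^{⊗d})` of the
permutation operators `P_σ`, `σ ∈ S_d`, is exactly the `ℂ`-linear span of the
operators `g^{⊗d}`, `g ∈ GL(ℂ^n)`. -/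
theorem centralizer_perm_eq_span_tensorPow {n d : ℕ} (hn : 0 < n) (hd : 0 < d) :
    {f : TensorPow n d →ₗ[ℂ] TensorPow n d |
        ∀ σ : Equiv.Perm (Fin d),
          f ∘ₗ permFactors n d σ = permFactors n d σ ∘ₗ f} =
      ↑(Submodule.span ℂ (Set.range (tensorPowMap n d))) :=
  centralizer_perm_eq_span_tensorPow_general
end

section
/- Let n, m, d be positive integers and let P denote the ℂ-vector space of homogeneous polynomials of degree d in the nm variables x_{ij} (1 ≤ i ≤ n, 1 ≤ j ≤ m). For g ∈ GL_n(ℂ) let L_g ∈ End_ℂ(P) be the algebra-substitution operator determined by x_{ij} ↦ ∑_{k=1}^n g_{ki} x_{kj}, and for h ∈ GL_m(ℂ) let R_h ∈ End_ℂ(P) be determined by x_{ij} ↦ ∑_{l=1}^m x_{il} h_{lj} (both substitutions preserve homogeneity of degree d). Then the centralizer in End_ℂ(P) of {L_g : g ∈ GL_n(ℂ)} equals the ℂ-linear span of {R_h : h ∈ GL_m(ℂ)}, and symmetrically the centralizer of {R_h : h ∈ GL_m(ℂ)} equals the ℂ-linear span of {L_g : g ∈ GL_n(ℂ)}. (This is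 the double-centralizer form of the (gl_n, gl_m)-duality on S^d(ℂ^n ⊗ ℂ^m).) -/
open MvPolynomial

/-- `P = S^d(ℂ^n ⊗ ℂ^m)`: homogeneous polynomials of degree `d` in the `nm`
variables `x_{ij}`. -/
noncomputable abbrev HomogPoly (n m d : ℕ) :
    Submodule ℂ (MvPolynomial (Fin n × Fin m) ℂ) :=
  MvPolynomial.homogeneousSubmodule (Fin n × Fin m) ℂ d

/-!
Symmetrization identifies `S^d(K^α ⊗ K^β)` with `Hom_{S_d}((K^β)^{⊗d}, (K^α)^{⊗d})` when `d!` is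
invertible, and turns the two substitutions into left multiplication by `g^{⊗d}` and right
multiplication by `(h^{⊗d})ᵀ`. Since a polynomial function vanishing on `GL` vanishes, a linear
functional that kills every `g^{⊗d}` kills all of `End_{S_d}((K^α)^{⊗d})`; hence the `g^{⊗d}` span
it.

It remains to see that an endomorphism `F` of the space of equivariant matrices which commutes with
left multiplication by `End_{S_d}((K^α)^{⊗d})` is right multiplication by an equivariant matrix.
The products `B * A` with `A` equivariant span a left ideal of a matrix ring, which is generated by
an idempotent `∑ Bᵢ * Aᵢ`; averaging over `S_d` makes the `Bᵢ` equivariant as well and keeps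
`A = A * ∑ Bᵢ * Aᵢ` for all equivariant `A`, whence `F A = A * ∑ Bᵢ * F Aᵢ`. Transposition
exchanges the two halves of the duality.
-/

namespace GLDuality

open Matrix Representation

section EquivariantMatrices

variable (K G I J : Type*) [CommRing K] [Group G] [MulAction G I] [MulAction G J]

/-- The representation of `G` on `I × J` matrices by simultaneous permutation of rows and columns,
that is, on `Hom(K^J, K^I)` for the permutation representations `K^I` and `K^J`. -/
def matrixRep : Representation K G (Matrix I J K) where
  toFun g :=
    (reindexLinearEquiv K K (MulAction.toPerm g) (MulAction.toPerm g)).toLinearMap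
  map_one' := by ext; simp
  map_mul' g h := by ext; simp [mul_smul]

/-- The matrices of the `G`-equivariant linear maps `K^J → K^I`. -/
noncomputable abbrev equivariantMatrix : Submodule K (Matrix I J K) :=
  (matrixRep K G I J).invariants

/-- Multiplication of rectangular matrices as a bilinear map. -/
def matrixMul (I J L : Type*) [Fintype J] :
    Matrix I J K →ₗ[K] Matrix J L K →ₗ[K] Matrix I L K :=
  LinearMap.mk₂ K (· * ·) Matrix.add_mul Matrix.smul_mul Matrix.mul_add
    fun c A B => Matrix.mul_smul A c B

variable {K G I J} {L : Type*} [MulAction G L]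

@[simp]
lemma matrixMul_apply [Fintype J] (A : Matrix I J K) (B : Matrix J L K) :
    matrixMul K I J L A B = A * B := rfl

lemma matrixRep_apply (g : G) (A : Matrix I J K) (i : I) (j : J) :
    matrixRep K G I J g A i j = A (g⁻¹ • i) (g⁻¹ • j) := rfl

lemma mem_equivariantMatrix_iff {A : Matrix I J K} :
    A ∈ equivariantMatrix K G I J ↔ ∀ (g : G) i j, A (g • i) (g • j) = A i j := by
  refine ⟨fun hA g i j => ?_, fun hA g => ?_⟩
  · simpa [matrixRep_apply] using congr_fun₂ (hA g⁻¹) i j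
  · ext i j
    exact hA g⁻¹ i j

lemma matrixRep_mul [Fintype J] (g : G) (A : Matrix I J K) (B : Matrix J L K) :
    matrixRep K G I L g (A * B) = matrixRep K G I J g A * matrixRep K G J L g B :=
  (reindexLinearEquiv_mul K K _ _ _ A B).symm

lemma mul_mem_equivariantMatrix [Fintype J] {A : Matrix I J K} {B : Matrix J L K}
    (hA : A ∈ equivariantMatrix K G I J) (hB : B ∈ equivariantMatrix K G J L) :
    A * B ∈ equivariantMatrix K G I L := fun g => by
  rw [matrixRep_mul, hA g, hB g]

lemma transpose_mem_equivariantMatrix {A : Matrix I J K} (hA : A ∈ equivariantMatrix K G I J) :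
    Aᵀ ∈ equivariantMatrix K G J I := fun g =>
  congr_arg transpose (hA g)

variable (K G I J) in
lemma map_transpose_equivariantMatrix :
    (equivariantMatrix K G I J).map (transposeLinearEquiv I J K K).toLinearMap =
      equivariantMatrix K G J I :=
  le_antisymm (Submodule.map_le_iff_le_comap.2 fun _ => transpose_mem_equivariantMatrix)
    fun A hA => ⟨Aᵀ, transpose_mem_equivariantMatrix hA, A.transpose_transpose⟩

variable (K G I J) in
/-- Transposition as a linear equivalence between spaces of equivariant matrices. -/
noncomputable def equivariantTranspose :
    equivariantMatrix K G I J ≃ₗ[K] equivariantMatrix K G J I :=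
  (transposeLinearEquiv I J K K).ofSubmodules _ _ (map_transpose_equivariantMatrix K G I J)

@[simp]
lemma coe_equivariantTranspose (A : equivariantMatrix K G I J) :
    (equivariantTranspose K G I J A : Matrix J I K) = (A : Matrix I J K)ᵀ := rfl

section Average

variable [Fintype G] [Invertible (Fintype.card G : K)]

lemma averageMap_eq_smul_sum {V : Type*} [AddCommGroup V] [Module K V] (ρ : Representation K G V)
    (v : V) : ρ.averageMap v = ⅟(Fintype.card G : K) • ∑ g, ρ g v := by
  simp [GroupAlgebra.average]

lemma averageMap_mul_left [Fintype J] {A : Matrix I J K} (hA : A ∈ equivariantMatrix K G I J)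
    (B : Matrix J L K) :
    (matrixRep K G I L).averageMap (A * B) = A * (matrixRep K G J L).averageMap B := by
  simp only [averageMap_eq_smul_sum, matrixRep_mul, hA _, Matrix.mul_smul, Matrix.mul_sum]

lemma averageMap_mul_right [Fintype J] (A : Matrix I J K) {B : Matrix J L K}
    (hB : B ∈ equivariantMatrix K G J L) :
    (matrixRep K G I L).averageMap (A * B) = (matrixRep K G I J).averageMap A * B := by
  simp only [averageMap_eq_smul_sum, matrixRep_mul, hB _, Matrix.smul_mul, Matrix.sum_mul]

lemma trace_averageMap [Fintype I] (A : Matrix I I K) :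
    ((matrixRep K G I I).averageMap A).trace = A.trace := by
  have trace_matrixRep (g : G) : (matrixRep K G I I g A).trace = A.trace :=
    Equiv.sum_comp (MulAction.toPerm g⁻¹) fun i => A i i
  rw [averageMap_eq_smul_sum]
  simp [trace_sum, trace_matrixRep, ← mul_assoc]

end Average

end EquivariantMatrices

lemma exists_forall_eq_trace_transpose_mul {K I J : Type*} [CommSemiring K] [Fintype I] [Fintype J]
    (l : Matrix I J K →ₗ[K] K) : ∃ B : Matrix I J K, ∀ A, l A = (Aᵀ * B).trace := by
  classical
  refine ⟨of fun i j => l (single i j 1), fun A => ?_⟩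
  have l_single (i : I) (j : J) : l (single i j (A i j)) = A i j * l (single i j 1) := by
    rw [← smul_eq_mul, ← map_smul, smul_single, smul_eq_mul, mul_one]
  conv_lhs => rw [matrix_eq_sum_single A]
  rw [trace_mul_comm, ← trace_transpose]
  simp [l_single, trace, Matrix.mul_apply]

section SpanTransfer

variable {K X M N P : Type*} [CommSemiring K] [AddCommMonoid M] [Module K M] [AddCommMonoid N]
  [Module K N] [AddCommMonoid P] [Module K P] {Ψ : P →ₗ[K] N} {m : M →ₗ[K] N →ₗ[K] N} {w : X → M}
  {R : X → P →ₗ[K] P}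

lemma map_linearCombination_apply (hR : ∀ x p, Ψ (R x p) = m (w x) (Ψ p)) (c : X →₀ K) (p : P) :
    Ψ (Finsupp.linearCombination K R c p) = m (Finsupp.linearCombination K w c) (Ψ p) := by
  simp [Finsupp.linearCombination_apply, Finsupp.sum, LinearMap.sum_apply, hR]

lemma mem_span_range_iff_exists_map_apply_eq (hΨ : Function.Injective Ψ)
    (hR : ∀ x p, Ψ (R x p) = m (w x) (Ψ p)) {f : P →ₗ[K] P} :
    f ∈ Submodule.span K (Set.range R) ↔
      ∃ u ∈ Submodule.span K (Set.range w), ∀ p, Ψ (f p) = m u (Ψ p) := by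
  simp only [← Finsupp.range_linearCombination, LinearMap.mem_range]
  constructor
  · rintro ⟨c, rfl⟩
    exact ⟨_, ⟨c, rfl⟩, map_linearCombination_apply hR c⟩
  · rintro ⟨_, ⟨c, rfl⟩, hf⟩
    exact ⟨c, LinearMap.ext fun p => hΨ ((map_linearCombination_apply hR c p).trans (hf p).symm)⟩

lemma map_apply_eq_of_commute (hΨ : Function.Injective Ψ) (hR : ∀ x p, Ψ (R x p) = m (w x) (Ψ p))
    {f : P →ₗ[K] P} (hf : ∀ x, f ∘ₗ R x = R x ∘ₗ f) {u : M}
    (hu : u ∈ Submodule.span K (Set.range w)) {p q : P} (hq : Ψ q = m u (Ψ p)) :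
    Ψ (f q) = m u (Ψ (f p)) := by
  obtain ⟨c, rfl⟩ := Finsupp.mem_span_range_iff_exists_finsupp.1 hu
  rw [← Finsupp.linearCombination_apply, ← map_linearCombination_apply hR] at hq ⊢
  have hfR (x : X) (p : P) : f (R x p) = R x (f p) := LinearMap.congr_fun (hf x) p
  rw [hΨ hq]
  simp [Finsupp.linearCombination_apply, Finsupp.sum, LinearMap.sum_apply, hfR]

end SpanTransfer

section DoubleCentralizer

variable {K : Type*} [Field K]

-- The span of the products `B * A` with `A ∈ N` is a left ideal of the semisimple ring
-- `Matrix J J K`, hence generated by an idempotent.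
lemma exists_mem_map₂_top_mul_eq_self {I J : Type*} [Fintype I] [Fintype J]
    (N : Submodule K (Matrix I J K)) :
    ∃ e ∈ Submodule.map₂ (matrixMul K J I J) ⊤ N, ∀ A ∈ N, A * e = A := by
  classical
  let ideal : Ideal (Matrix J J K) :=
    { Submodule.map₂ (matrixMul K J I J) ⊤ N with
      smul_mem' := fun C x hx => by
        suffices Submodule.map₂ (matrixMul K J I J) ⊤ N ≤
            (Submodule.map₂ (matrixMul K J I J) ⊤ N).comap (LinearMap.mulLeft K C) from this hx
        refine Submodule.map₂_le.2 fun B _ A hA => ?_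
        simpa [← Matrix.mul_assoc] using
          Submodule.apply_mem_map₂ (matrixMul K J I J) (Submodule.mem_top (x := C * B)) hA }
  obtain ⟨e, he, hspan⟩ := IsSemisimpleRing.ideal_eq_span_idempotent ideal
  have mul_e (x : Matrix J J K) (hx : x ∈ ideal) : x * e = x := by
    obtain ⟨y, rfl⟩ := Ideal.mem_span_singleton'.1 (hspan ▸ hx)
    rw [mul_assoc, he]
  refine ⟨e, show e ∈ ideal from hspan ▸ Ideal.mem_span_singleton_self e, fun A hA => ?_⟩
  ext i j
  have hBA := mul_e (single j i (1 : K) * A)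
    (Submodule.apply_mem_map₂ (matrixMul K J I J) Submodule.mem_top hA)
  simpa [Matrix.mul_assoc] using congr_fun₂ hBA j j

variable {G I J : Type*} [Group G] [Fintype G] [Invertible (Fintype.card G : K)]
  [MulAction G I] [MulAction G J] [Fintype I] [Fintype J]

variable (K G I J) in
lemma exists_mem_map₂_equivariantMatrix_mul_eq_self :
    ∃ e ∈ Submodule.map₂ (matrixMul K J I J) (equivariantMatrix K G J I)
      (equivariantMatrix K G I J), ∀ A ∈ equivariantMatrix K G I J, A * e = A := by
  obtain ⟨e, he, hAe⟩ := exists_mem_map₂_top_mul_eq_self (equivariantMatrix K G I J)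
  refine ⟨(matrixRep K G J J).averageMap e, ?_, fun A hA => ?_⟩
  · suffices Submodule.map₂ (matrixMul K J I J) ⊤ (equivariantMatrix K G I J) ≤
        (Submodule.map₂ (matrixMul K J I J) (equivariantMatrix K G J I)
          (equivariantMatrix K G I J)).comap (matrixRep K G J J).averageMap from this he
    refine Submodule.map₂_le.2 fun B _ A hA => ?_
    rw [Submodule.mem_comap, matrixMul_apply, averageMap_mul_right B hA]
    exact Submodule.apply_mem_map₂ (matrixMul K J I J) (averageMap_invariant _ B) hA
  · rw [← averageMap_mul_left hA, hAe A hA, averageMap_id _ A hA]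

theorem exists_mem_equivariantMatrix_eq_mul {L : Type*} [MulAction G L]
    (F : equivariantMatrix K G I J →ₗ[K] equivariantMatrix K G I L)
    (hF : ∀ {S : Matrix I I K} (hS : S ∈ equivariantMatrix K G I I) (A : equivariantMatrix K G I J),
      (F ⟨S * (A : Matrix I J K), mul_mem_equivariantMatrix hS A.2⟩ : Matrix I L K) =
        S * (F A : Matrix I L K)) :
    ∃ u ∈ equivariantMatrix K G J L, ∀ A, (F A : Matrix I L K) = (A : Matrix I J K) * u := by
  obtain ⟨F_ext, hF_ext⟩ := ((equivariantMatrix K G I L).subtype ∘ₗ F).exists_extend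
  have F_ext_coe (A : equivariantMatrix K G I J) : F_ext (A : Matrix I J K) = F A :=
    LinearMap.congr_fun hF_ext A
  obtain ⟨e, he, hAe⟩ := exists_mem_map₂_equivariantMatrix_mul_eq_self K G I J
  suffices ∃ u ∈ equivariantMatrix K G J L,
      ∀ A : equivariantMatrix K G I J, F_ext ((A : Matrix I J K) * e) = (A : Matrix I J K) * u by
    obtain ⟨u, hu, hF_ext_u⟩ := this
    exact ⟨u, hu, fun A => by rw [← F_ext_coe, ← hF_ext_u, hAe _ A.2]⟩
  -- For `e = ∑ Bᵢ * Aᵢ` this is `F_ext (A * e) = ∑ F (A * Bᵢ * Aᵢ) = A * ∑ Bᵢ * F Aᵢ`.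
  rw [Submodule.map₂_eq_span_image2] at he
  clear hAe
  induction he using Submodule.span_induction with
  | mem x hx =>
    obtain ⟨B, hB, A, hA, rfl⟩ := hx
    refine ⟨B * (F ⟨A, hA⟩ : Matrix I L K), mul_mem_equivariantMatrix hB (F ⟨A, hA⟩).2,
      fun C => ?_⟩
    simp only [matrixMul_apply]
    rw [← Matrix.mul_assoc, ← Matrix.mul_assoc,
      ← hF (mul_mem_equivariantMatrix C.2 hB), ← F_ext_coe]
  | zero => exact ⟨0, zero_mem _, by simp⟩
  | add x y _ _ hx hy =>
    obtain ⟨u, hu, hxu⟩ := hx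
    obtain ⟨v, hv, hyv⟩ := hy
    exact ⟨u + v, add_mem hu hv, fun A => by simp [Matrix.mul_add, hxu, hyv]⟩
  | smul c x _ hx =>
    obtain ⟨u, hu, hxu⟩ := hx
    exact ⟨c • u, Submodule.smul_mem _ c hu, fun A => by simp [hxu]⟩

theorem centralizer_eq_span_range {X Y P : Type*} [AddCommGroup P] [Module K P]
    (Ψ : P ≃ₗ[K] equivariantMatrix K G I J) {L : X → P →ₗ[K] P} {v : X → Matrix I I K}
    (hv : Submodule.span K (Set.range v) = equivariantMatrix K G I I)
    (hL : ∀ x p, (Ψ (L x p) : Matrix I J K) = v x * (Ψ p : Matrix I J K))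
    {R : Y → P →ₗ[K] P} {w : Y → Matrix J J K}
    (hw : Submodule.span K (Set.range w) = equivariantMatrix K G J J)
    (hR : ∀ y p, (Ψ (R y p) : Matrix I J K) = (Ψ p : Matrix I J K) * w y) :
    {f : P →ₗ[K] P | ∀ x, f ∘ₗ L x = L x ∘ₗ f} = ↑(Submodule.span K (Set.range R)) := by
  have coe_injective : Function.Injective ((equivariantMatrix K G I J).subtype ∘ₗ Ψ.toLinearMap) :=
    (Submodule.injective_subtype _).comp Ψ.injective
  ext f
  rw [SetLike.mem_coe, mem_span_range_iff_exists_map_apply_eq (m := (matrixMul K I J J).flip)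
    coe_injective hR, hw]
  refine ⟨fun hf => ?_, fun ⟨u, _, hfu⟩ x => LinearMap.ext fun p => coe_injective ?_⟩
  · obtain ⟨u, hu, hfu⟩ := exists_mem_equivariantMatrix_eq_mul (Ψ.conj f) fun {S} hS A =>
      map_apply_eq_of_commute (m := matrixMul K I I J) coe_injective hL hf (hv.ge hS) (by simp)
    exact ⟨u, hu, fun p => by simpa using hfu (Ψ p)⟩
  · have Ψ_f (p : P) : (Ψ (f p) : Matrix I J K) = (Ψ p : Matrix I J K) * u := hfu p
    simp [Ψ_f, hL, Matrix.mul_assoc]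

end DoubleCentralizer

section SymmetricPower

open Equiv

-- `Perm ι` acts on multi-indices `q : ι → σ` by `(s • q) k = q (s⁻¹ k)`.
attribute [local instance] arrowAction

section Monomials

variable {ι σ : Type*} [Fintype ι]

lemma mem_orbit_perm_iff_sum_single_eq {p q : ι → σ} :
    p ∈ MulAction.orbit (Perm ι) q ↔
      ∑ k, Finsupp.single (p k) 1 = ∑ k, Finsupp.single (q k) 1 := by
  classical
  refine ⟨?_, fun h => ?_⟩
  · rintro ⟨s, rfl⟩
    exact Equiv.sum_comp s⁻¹ fun k => Finsupp.single (q k) 1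
  · have sum_single_apply (r : ι → σ) (c : σ) :
        (∑ k, Finsupp.single (r k) 1 : σ →₀ ℕ) c = Fintype.card {k // r k = c} := by
      rw [Fintype.card_subtype, Finset.card_filter, Finsupp.finsetSum_apply]
      simp only [Finsupp.single_apply]
    have fiberEquiv (c : σ) : {k // q k = c} ≃ {k // p k = c} :=
      Fintype.equivOfCardEq (by rw [← sum_single_apply, ← sum_single_apply, h])
    refine ⟨((Equiv.sigmaFiberEquiv q).symm.trans (Equiv.sigmaCongrRight fiberEquiv)).trans
      (Equiv.sigmaFiberEquiv p), ?_⟩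
    ext k
    exact ((fiberEquiv _).symm ⟨k, rfl⟩).2

lemma prod_X_eq_monomial (K : Type*) [CommSemiring K] (q : ι → σ) :
    (∏ k, X (q k) : MvPolynomial σ K) = monomial (∑ k, Finsupp.single (q k) 1) 1 :=
  (monomial_sum_one _ _).symm

lemma homogeneousSubmodule_eq_span_prod_X (σ K : Type*) [CommSemiring K] (d : ℕ) :
    homogeneousSubmodule σ K d =
      Submodule.span K (Set.range fun q : Fin d → σ => ∏ k, X (q k)) := by
  rw [← homogeneousSubmodule_one_pow, homogeneousSubmodule_one_eq_span_X, Submodule.span_pow]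
  congr 1
  ext p
  rw [Set.mem_pow_iff_prod]
  constructor
  · rintro ⟨f, hf, rfl⟩
    choose q hq using hf
    exact ⟨q, by simp only [hq]⟩
  · rintro ⟨q, rfl⟩
    exact ⟨fun k => X (q k), fun k => ⟨q k, rfl⟩, rfl⟩

end Monomials

section TensorPow

variable {K α β : Type*} [CommSemiring K] (ι : Type*) [Fintype ι]

/-- The Kronecker power `g ⊗ ⋯ ⊗ g` with factors indexed by `ι`, as a matrix indexed by
multi-indices. -/
def tensorPow (g : Matrix α β K) : Matrix (ι → α) (ι → β) K :=
  of fun i j => ∏ k, g (i k) (j k)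

@[simp]
lemma tensorPow_apply (g : Matrix α β K) (i : ι → α) (j : ι → β) :
    tensorPow ι g i j = ∏ k, g (i k) (j k) := rfl

lemma tensorPow_mem_equivariantMatrix {K : Type*} [CommRing K] (g : Matrix α β K) :
    tensorPow ι g ∈ equivariantMatrix K (Perm ι) (ι → α) (ι → β) :=
  mem_equivariantMatrix_iff.2 fun s i j => Equiv.prod_comp s⁻¹ fun k => g (i k) (j k)

end TensorPow

section MatrixToMvPolynomial

variable (K ι α β : Type*) [CommSemiring K] [Fintype ι] [DecidableEq ι] [Fintype α] [Fintype β]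

/-- The symmetrization map from `Hom((K^β)^{⊗ι}, (K^α)^{⊗ι}) ≅ (K^α ⊗ K^β)^{⊗ι}` to the symmetric
power of `K^α ⊗ K^β`: the matrix unit at `(i, j)` goes to the monomial `∏ k, x_{i k, j k}`. -/
noncomputable def matrixToMvPolynomial :
    Matrix (ι → α) (ι → β) K →ₗ[K] MvPolynomial (α × β) K where
  toFun A := ∑ i, ∑ j, A i j • ∏ k, X (i k, j k)
  map_add' A B := by simp [add_smul, Finset.sum_add_distrib]
  map_smul' c A := by simp [Finset.smul_sum, smul_smul]

variable {K ι α β}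

lemma matrixToMvPolynomial_apply (A : Matrix (ι → α) (ι → β) K) :
    matrixToMvPolynomial K ι α β A = ∑ i, ∑ j, A i j • ∏ k, X (i k, j k) := rfl

lemma eval_matrixToMvPolynomial (g : Matrix α β K) (B : Matrix (ι → α) (ι → β) K) :
    eval (fun q => g q.1 q.2) (matrixToMvPolynomial K ι α β B) = ((tensorPow ι g)ᵀ * B).trace := by
  rw [trace_mul_comm]
  simp only [matrixToMvPolynomial_apply, map_sum, smul_eval, map_prod, eval_X, trace, diag_apply,
    Matrix.mul_apply, transpose_apply, tensorPow_apply]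

lemma range_matrixToMvPolynomial (d : ℕ) :
    LinearMap.range (matrixToMvPolynomial K (Fin d) α β) = homogeneousSubmodule (α × β) K d := by
  classical
  refine le_antisymm ?_ ?_
  · rintro _ ⟨A, rfl⟩
    refine Submodule.sum_mem _ fun i _ => Submodule.sum_mem _ fun j _ => Submodule.smul_mem _ _ ?_
    rw [homogeneousSubmodule_eq_span_prod_X]
    exact Submodule.subset_span ⟨fun k => (i k, j k), rfl⟩
  · rw [homogeneousSubmodule_eq_span_prod_X, Submodule.span_le]
    rintro _ ⟨q, rfl⟩
    refine ⟨single (fun k => (q k).1) (fun k => (q k).2) 1, ?_⟩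
    simp [matrixToMvPolynomial_apply, single_apply, ite_and]

end MatrixToMvPolynomial

section Substitution

variable {K ι α α' β β' : Type*} [CommSemiring K] [Fintype ι] [DecidableEq ι] [Fintype α]
  [Fintype α'] [Fintype β] [Fintype β']

/-- The substitution `x_{ij} ↦ ∑_k g_{ki} x_{kj}`, that is, the action of `g` on the first factor
of `S(K^α ⊗ K^β)`. -/
noncomputable def rowSubst (g : Matrix α' α K) :
    MvPolynomial (α × β) K →ₐ[K] MvPolynomial (α' × β) K :=
  aeval fun q => ∑ k, C (g k q.1) * X (k, q.2)

/-- The substitution `x_{ij} ↦ ∑_l h_{lj} x_{il}`, that is, the action of `h` on the second factor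
of `S(K^α ⊗ K^β)`. -/
noncomputable def colSubst (h : Matrix β' β K) :
    MvPolynomial (α × β) K →ₐ[K] MvPolynomial (α × β') K :=
  aeval fun q => ∑ l, C (h l q.2) * X (q.1, l)

lemma rowSubst_matrixToMvPolynomial (g : Matrix α' α K) (A : Matrix (ι → α) (ι → β) K) :
    rowSubst g (matrixToMvPolynomial K ι α β A) =
      matrixToMvPolynomial K ι α' β (tensorPow ι g * A) := by
  have rowSubst_prod_X (i : ι → α) (j : ι → β) :
      rowSubst g (∏ k, X (i k, j k)) = ∑ i', tensorPow ι g i' i • ∏ k, X (i' k, j k) := by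
    simp [rowSubst, Fintype.prod_sum, Finset.prod_mul_distrib, smul_eq_C_mul]
  simp only [matrixToMvPolynomial_apply, map_sum, map_smul, rowSubst_prod_X, Matrix.mul_apply,
    Finset.smul_sum, Finset.sum_smul, smul_smul, mul_comm (tensorPow ι g _ _)]
  rw [Finset.sum_comm_cycle]
  exact Finset.sum_congr rfl fun i' _ => Finset.sum_comm

lemma colSubst_matrixToMvPolynomial (h : Matrix β' β K) (A : Matrix (ι → α) (ι → β) K) :
    colSubst h (matrixToMvPolynomial K ι α β A) =
      matrixToMvPolynomial K ι α β' (A * (tensorPow ι h)ᵀ) := by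
  have colSubst_prod_X (i : ι → α) (j : ι → β) :
      colSubst h (∏ k, X (i k, j k)) = ∑ j', tensorPow ι h j' j • ∏ k, X (i k, j' k) := by
    simp [colSubst, Fintype.prod_sum, Finset.prod_mul_distrib, smul_eq_C_mul]
  simp only [matrixToMvPolynomial_apply, map_sum, map_smul, colSubst_prod_X, Matrix.mul_apply,
    Finset.smul_sum, Finset.sum_smul, smul_smul, transpose_apply]
  exact Finset.sum_congr rfl fun i _ => Finset.sum_comm

end Substitution

section Symmetrization

variable {K ι α β : Type*} [CommRing K] [Fintype ι] [DecidableEq ι] [Fintype α] [Fintype β]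

lemma matrixToMvPolynomial_matrixRep (s : Perm ι) (A : Matrix (ι → α) (ι → β) K) :
    matrixToMvPolynomial K ι α β (matrixRep K (Perm ι) _ _ s A) =
      matrixToMvPolynomial K ι α β A := by
  simp only [matrixToMvPolynomial_apply]
  rw [← Equiv.sum_comp (MulAction.toPerm s)]
  refine Finset.sum_congr rfl fun i _ => ?_
  rw [← Equiv.sum_comp (MulAction.toPerm s)]
  refine Finset.sum_congr rfl fun j _ => ?_
  congr 1
  · simp [matrixRep_apply]
  · exact Equiv.prod_comp s⁻¹ fun k => (X (i k, j k) : MvPolynomial (α × β) K)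

lemma matrixToMvPolynomial_averageMap [Invertible (Fintype.card (Perm ι) : K)]
    (A : Matrix (ι → α) (ι → β) K) :
    matrixToMvPolynomial K ι α β ((matrixRep K (Perm ι) _ _).averageMap A) =
      matrixToMvPolynomial K ι α β A := by
  rw [averageMap_eq_smul_sum, map_smul, map_sum]
  simp only [matrixToMvPolynomial_matrixRep, Finset.sum_const, Finset.card_univ]
  rw [← Nat.cast_smul_eq_nsmul K, invOf_smul_smul]

lemma coeff_matrixToMvPolynomial {A : Matrix (ι → α) (ι → β) K}
    (hA : A ∈ equivariantMatrix K (Perm ι) (ι → α) (ι → β)) (i : ι → α) (j : ι → β) :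
    coeff (∑ k, Finsupp.single (i k, j k) 1) (matrixToMvPolynomial K ι α β A) =
      (MulAction.orbit (Perm ι) (i, j)).ncard * A i j := by
  classical
  have mem_orbit_iff (p : (ι → α) × (ι → β)) : p ∈ MulAction.orbit (Perm ι) (i, j) ↔
      ∑ k, Finsupp.single (p.1 k, p.2 k) 1 = ∑ k, Finsupp.single (i k, j k) 1 := by
    rw [← mem_orbit_perm_iff_sum_single_eq]
    exact exists_congr fun s => by
      simp only [Prod.ext_iff, funext_iff, ← forall_and]
      rfl
  have coeff_smul_prod_X (p : (ι → α) × (ι → β)) :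
      coeff (∑ k, Finsupp.single (i k, j k) 1) (A p.1 p.2 • ∏ k, X (p.1 k, p.2 k)) =
        if p ∈ MulAction.orbit (Perm ι) (i, j) then A i j else 0 := by
    rw [prod_X_eq_monomial K fun k => (p.1 k, p.2 k), coeff_smul, coeff_monomial, smul_eq_mul,
      mul_ite, mul_one, mul_zero]
    refine ite_congr (propext (mem_orbit_iff p).symm) (fun hp => ?_) fun _ => rfl
    obtain ⟨s, rfl⟩ := hp
    exact mem_equivariantMatrix_iff.1 hA s i j
  rw [matrixToMvPolynomial_apply, ← Fintype.sum_prod_type', coeff_sum]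
  simp only [coeff_smul_prod_X]
  simp [Finset.sum_ite, Set.ncard_eq_toFinset_card']

variable (K ι α β) in
lemma injOn_matrixToMvPolynomial [Invertible (Fintype.card (Perm ι) : K)] :
    Set.InjOn (matrixToMvPolynomial K ι α β)
      (equivariantMatrix K (Perm ι) (ι → α) (ι → β)) := by
  intro A hA B hB h
  ext i j
  have isUnit_ncard_orbit : IsUnit ((MulAction.orbit (Perm ι) (i, j)).ncard : K) := by
    refine isUnit_of_dvd_unit (Nat.cast_dvd_cast ?_)
      (isUnit_of_invertible (Fintype.card (Perm ι) : K))
    rw [← MulAction.index_stabilizer, ← Nat.card_eq_fintype_card]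
    exact Subgroup.index_dvd_card _
  refine isUnit_ncard_orbit.mul_left_cancel ?_
  rw [← coeff_matrixToMvPolynomial hA, ← coeff_matrixToMvPolynomial hB, h]

variable (K α β) in
/-- Homogeneous polynomials of degree `d` in the variables `x_{ij}` as `S_d`-equivariant maps
`(K^β)^{⊗d} → (K^α)^{⊗d}`, by the inverse of symmetrization (`matrixToMvPolynomial`). -/
noncomputable def homogeneousSubmoduleEquiv (d : ℕ)
    [Invertible (Fintype.card (Perm (Fin d)) : K)] :
    homogeneousSubmodule (α × β) K d ≃ₗ[K]
      equivariantMatrix K (Perm (Fin d)) (Fin d → α) (Fin d → β) :=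
  LinearEquiv.symm <| LinearEquiv.ofBijective
    ((matrixToMvPolynomial K (Fin d) α β ∘ₗ Submodule.subtype _).codRestrict _ fun A =>
      (range_matrixToMvPolynomial d).le (LinearMap.mem_range_self _ _))
    ⟨fun A B hAB => Subtype.ext <|
      injOn_matrixToMvPolynomial K (Fin d) α β A.2 B.2 (congr_arg Subtype.val hAB),
    fun p => by
      obtain ⟨A, hA⟩ := (range_matrixToMvPolynomial d).ge p.2
      exact ⟨⟨(matrixRep K _ _ _).averageMap A, averageMap_invariant _ A⟩,
        Subtype.ext ((matrixToMvPolynomial_averageMap A).trans hA)⟩⟩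

end Symmetrization

section Span

variable {K α : Type*} [Field K] [Infinite K] [Fintype α] [DecidableEq α]

lemma eq_zero_of_forall_GL_eval_eq_zero {p : MvPolynomial (α × α) K}
    (hp : ∀ g : GL α K, eval (fun q => g q.1 q.2) p = 0) : p = 0 := by
  refine (mul_eq_zero_iff_right (det_mvPolynomialX_ne_zero α K)).1 (MvPolynomial.funext fun x => ?_)
  have eval_det : eval x (mvPolynomialX α α K).det = (of fun i j => x (i, j)).det := by
    rw [RingHom.map_det]
    congr 1
    ext i j
    simp
  rw [map_mul, map_zero, eval_det, mul_eq_zero]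
  exact or_iff_not_imp_right.2 fun hx => hp (GeneralLinearGroup.mkOfDetNeZero _ hx)

variable {ι : Type*} [Fintype ι] [DecidableEq ι] [Invertible (Fintype.card (Perm ι) : K)]

variable (K ι α) in
theorem span_tensorPow_GL_eq_equivariantMatrix :
    Submodule.span K (Set.range fun g : GL α K => tensorPow ι (g : Matrix α α K)) =
      equivariantMatrix K (Perm ι) (ι → α) (ι → α) := by
  refine le_antisymm (Submodule.span_le.2 ?_) fun S hS => ?_
  · rintro _ ⟨g, rfl⟩
    exact tensorPow_mem_equivariantMatrix ι _
  by_contra hS_notMem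
  obtain ⟨l, hlS, hl⟩ := Submodule.exists_le_ker_of_notMem hS_notMem
  obtain ⟨B, hB⟩ := exists_forall_eq_trace_transpose_mul l
  have matrixToMvPolynomial_B : matrixToMvPolynomial K ι α α B = 0 :=
    eq_zero_of_forall_GL_eval_eq_zero fun g => by
      rw [eval_matrixToMvPolynomial, ← hB]
      exact hl (Submodule.subset_span ⟨g, rfl⟩)
  have averageMap_B : (matrixRep K (Perm ι) (ι → α) (ι → α)).averageMap B = 0 :=
    injOn_matrixToMvPolynomial K ι α α (averageMap_invariant _ B) (zero_mem _) <| by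
      rw [matrixToMvPolynomial_averageMap, matrixToMvPolynomial_B, map_zero]
  rw [hB, ← trace_averageMap (G := Perm ι),
    averageMap_mul_left (transpose_mem_equivariantMatrix hS), averageMap_B] at hlS
  simp at hlS

variable (K ι α) in
theorem span_transpose_tensorPow_GL_eq_equivariantMatrix :
    Submodule.span K (Set.range fun g : GL α K => (tensorPow ι (g : Matrix α α K))ᵀ) =
      equivariantMatrix K (Perm ι) (ι → α) (ι → α) := by
  rw [← map_transpose_equivariantMatrix, ← span_tensorPow_GL_eq_equivariantMatrix,
    Submodule.map_span, ← Set.range_comp]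
  rfl

end Span

section Intertwining

variable {K α β : Type*} [CommRing K] [Fintype α] [Fintype β] {d : ℕ}
  [Invertible (Fintype.card (Perm (Fin d)) : K)]

lemma coe_homogeneousSubmoduleEquiv_eq_of_matrixToMvPolynomial_eq
    {p : homogeneousSubmodule (α × β) K d} {A : Matrix (Fin d → α) (Fin d → β) K}
    (hA : A ∈ equivariantMatrix K (Perm (Fin d)) (Fin d → α) (Fin d → β))
    (h : matrixToMvPolynomial K (Fin d) α β A = p) :
    (homogeneousSubmoduleEquiv K α β d p : Matrix (Fin d → α) (Fin d → β) K) = A := by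
  suffices p = (homogeneousSubmoduleEquiv K α β d).symm ⟨A, hA⟩ by
    rw [this, LinearEquiv.apply_symm_apply]
  exact Subtype.ext h.symm

lemma matrixToMvPolynomial_homogeneousSubmoduleEquiv (p : homogeneousSubmodule (α × β) K d) :
    matrixToMvPolynomial K (Fin d) α β (homogeneousSubmoduleEquiv K α β d p) = p :=
  congr_arg Subtype.val ((homogeneousSubmoduleEquiv K α β d).symm_apply_apply p)

lemma coe_homogeneousSubmoduleEquiv_rowSubst {p q : homogeneousSubmodule (α × β) K d}
    {g : Matrix α α K} (hq : (q : MvPolynomial (α × β) K) = rowSubst g p) :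
    (homogeneousSubmoduleEquiv K α β d q : Matrix (Fin d → α) (Fin d → β) K) =
      tensorPow (Fin d) g *
        (homogeneousSubmoduleEquiv K α β d p : Matrix (Fin d → α) (Fin d → β) K) :=
  coe_homogeneousSubmoduleEquiv_eq_of_matrixToMvPolynomial_eq
    (mul_mem_equivariantMatrix (tensorPow_mem_equivariantMatrix _ g) (Subtype.prop _))
    (by rw [← rowSubst_matrixToMvPolynomial, matrixToMvPolynomial_homogeneousSubmoduleEquiv, hq])

lemma coe_homogeneousSubmoduleEquiv_colSubst {p q : homogeneousSubmodule (α × β) K d}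
    {h : Matrix β β K} (hq : (q : MvPolynomial (α × β) K) = colSubst h p) :
    (homogeneousSubmoduleEquiv K α β d q : Matrix (Fin d → α) (Fin d → β) K) =
      (homogeneousSubmoduleEquiv K α β d p : Matrix (Fin d → α) (Fin d → β) K) *
        (tensorPow (Fin d) h)ᵀ :=
  coe_homogeneousSubmoduleEquiv_eq_of_matrixToMvPolynomial_eq
    (mul_mem_equivariantMatrix (Subtype.prop _)
      (transpose_mem_equivariantMatrix (tensorPow_mem_equivariantMatrix _ h)))
    (by rw [← colSubst_matrixToMvPolynomial, matrixToMvPolynomial_homogeneousSubmoduleEquiv, hq])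

end Intertwining

end SymmetricPower

end GLDuality

open GLDuality Equiv in
attribute [local instance] arrowAction in
theorem centralizer_gln_glm_duality_general {K α β : Type*} [Field K] [Infinite K] [Fintype α]
    [DecidableEq α] [Fintype β] [DecidableEq β] {d : ℕ} (hd : (d.factorial : K) ≠ 0)
    (L : GL α K → homogeneousSubmodule (α × β) K d →ₗ[K] homogeneousSubmodule (α × β) K d)
    (R : GL β K → homogeneousSubmodule (α × β) K d →ₗ[K] homogeneousSubmodule (α × β) K d)
    (hL : ∀ g p, (L g p : MvPolynomial (α × β) K) = rowSubst (g : Matrix α α K) p)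
    (hR : ∀ h p, (R h p : MvPolynomial (α × β) K) = colSubst (h : Matrix β β K) p) :
    {f | ∀ g, f ∘ₗ L g = L g ∘ₗ f} = (Submodule.span K (Set.range R) : Set _) ∧
      {f | ∀ h, f ∘ₗ R h = R h ∘ₗ f} = (Submodule.span K (Set.range L) : Set _) := by
  have : Invertible (Fintype.card (Perm (Fin d)) : K) :=
    invertibleOfNonzero (by rwa [Fintype.card_perm, Fintype.card_fin])
  let Ψ := homogeneousSubmoduleEquiv K α β d
  have Ψ_L (g : GL α K) p := coe_homogeneousSubmoduleEquiv_rowSubst (hL g p)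
  have Ψ_R (h : GL β K) p := coe_homogeneousSubmoduleEquiv_colSubst (hR h p)
  refine ⟨centralizer_eq_span_range Ψ (span_tensorPow_GL_eq_equivariantMatrix K α (Fin d)) Ψ_L
    (span_transpose_tensorPow_GL_eq_equivariantMatrix K β (Fin d)) Ψ_R,
    centralizer_eq_span_range (Ψ.trans (equivariantTranspose _ _ _ _))
      (span_tensorPow_GL_eq_equivariantMatrix K β (Fin d)) (fun h p => ?_)
      (span_transpose_tensorPow_GL_eq_equivariantMatrix K α (Fin d)) fun g p => ?_⟩
  · simp [Ψ, Ψ_R]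
  · simp [Ψ, Ψ_L]

/-- The `(gl_n, gl_m)`-duality on `S^d(ℂ^n ⊗ ℂ^m)` in double-centralizer form.  Here
`L g` (for `g ∈ GL_n(ℂ)`) is the substitution operator `x_{ij} ↦ ∑_k g_{ki} x_{kj}`
and `R h` (for `h ∈ GL_m(ℂ)`) is the substitution operator `x_{ij} ↦ ∑_l x_{il} h_{lj}`,
both acting on the space of homogeneous polynomials of degree `d`.  The centralizer in
`End_ℂ(P)` of the `L g` is the `ℂ`-linear span of the `R h`, and vice versa. -/
theorem centralizer_gln_glm_duality {n m d : ℕ} (hn : 0 < n) (hm : 0 < m) (hd : 0 < d)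
    (L : GL (Fin n) ℂ → (HomogPoly n m d →ₗ[ℂ] HomogPoly n m d))
    (R : GL (Fin m) ℂ → (HomogPoly n m d →ₗ[ℂ] HomogPoly n m d))
    (hL : ∀ (g : GL (Fin n) ℂ) (p : HomogPoly n m d),
      (L g p : MvPolynomial (Fin n × Fin m) ℂ) =
        MvPolynomial.aeval
          (fun q : Fin n × Fin m =>
            ∑ k : Fin n, MvPolynomial.C ((g : Matrix (Fin n) (Fin n) ℂ) k q.1) *
              MvPolynomial.X (k, q.2))
          (p : MvPolynomial (Fin n × Fin m) ℂ))
    (hR : ∀ (h : GL (Fin m) ℂ) (p : HomogPoly n m d),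
      (R h p : MvPolynomial (Fin n × Fin m) ℂ) =
        MvPolynomial.aeval
          (fun q : Fin n × Fin m =>
            ∑ l : Fin m, MvPolynomial.C ((h : Matrix (Fin m) (Fin m) ℂ) l q.2) *
              MvPolynomial.X (q.1, l))
          (p : MvPolynomial (Fin n × Fin m) ℂ)) :
    ({f : HomogPoly n m d →ₗ[ℂ] HomogPoly n m d |
        ∀ g : GL (Fin n) ℂ, f ∘ₗ L g = L g ∘ₗ f} =
      ↑(Submodule.span ℂ (Set.range R))) ∧
    ({f : HomogPoly n m d →ₗ[ℂ] HomogPoly n m d |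
        ∀ h : GL (Fin m) ℂ, f ∘ₗ R h = R h ∘ₗ f} =
      ↑(Submodule.span ℂ (Set.range L))) := by
  exact centralizer_gln_glm_duality_general (Nat.cast_ne_zero.2 d.factorial_ne_zero) L R hL hR
end
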